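/- arXiv:0710.1972 — 2 statements merged into one kernel-verified Lean document; each statement's English description precedes it below -/
import Mathlib

section
/- For every n ≥ 1, the ℂ[Sₙ]-module Vₙ given by π · I_w = (−1)^{inv_w(π)} I_{πwπ⁻¹} (extended linearly to the group algebra) is a Gelfand model for the group algebra ℂ[Sₙ]: for every simple ℂ[Sₙ]-module S, dim_ℂ Hom_{ℂ[Sₙ]}(S, Vₙ) = 1. -/
open Equiv

/-- The set of involutions in `Sₙ` (elements `w` with `w² = id`). -/
abbrev SymInv (n : ℕ) : Type := {w : Equiv.Perm (Fin n) // w * w = 1}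

/-- `Vₙ`: the complex vector space with basis `{I_w : w an involution in Sₙ}`. -/
abbrev Vn (n : ℕ) : Type := SymInv n →₀ ℂ

/-- `inv_w(π) = |Inv(π) ∩ Pair(w)|`. -/
noncomputable def invw (n : ℕ) (w π : Equiv.Perm (Fin n)) : ℕ :=
  {p : Fin n × Fin n | p.1 < p.2 ∧ w p.1 = p.2 ∧ π p.2 < π p.1}.ncard

/-- Conjugation of an involution by a permutation: `π w π⁻¹`. -/
def conjInv (n : ℕ) (π : Equiv.Perm (Fin n)) (w : SymInv n) : SymInv n :=
  ⟨π * w.1 * π⁻¹, by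
    have h : π * w.1 * π⁻¹ * (π * w.1 * π⁻¹) = π * (w.1 * w.1) * π⁻¹ := by group
    rw [h, w.2, mul_one, mul_inv_cancel]⟩

theorem Equiv.Perm.exists_commute_swap_cycles {α : Type*} [Finite α] (π : Perm α) {x y : α}
    (hper : ∀ i : ℤ, (π ^ i) x = x ↔ (π ^ i) y = y) (hxy : ¬ π.SameCycle x y) (e : ℤ) :
    ∃ t : Perm α, Commute t π ∧ t x = y ∧ t y = (π ^ e) x ∧
      (∀ z, π.SameCycle x z → π.SameCycle y (t z)) ∧
      (∀ z, π.SameCycle y z → π.SameCycle x (t z)) ∧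
      (∀ z, π.SameCycle x z ∨ π.SameCycle y z → t (t z) = (π ^ e) z) ∧
      ∀ z, ¬ π.SameCycle x z → ¬ π.SameCycle y z → t z = z := by
  classical
  have key : ∀ i j : ℤ, (π ^ i) x = (π ^ j) x ↔ (π ^ i) y = (π ^ j) y := by
    intro i j
    have h1 : ∀ w, (π ^ i) w = (π ^ j) w ↔ (π ^ (i - j)) w = w := by
      intro w
      rw [show i = j + (i - j) by ring, zpow_add, Perm.mul_apply]
      simp only [add_sub_cancel_left, EmbeddingLike.apply_eq_iff_eq]
    rw [h1, h1, hper]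
  let f : α → α := fun z =>
    if h : π.SameCycle x z then (π ^ h.choose) y
    else if h' : π.SameCycle y z then (π ^ (h'.choose + e)) x else z
  have fx : ∀ i : ℤ, f ((π ^ i) x) = (π ^ i) y := by
    intro i
    have h : π.SameCycle x ((π ^ i) x) := ⟨i, rfl⟩
    simp only [f, dif_pos h]
    exact (key _ _).1 h.choose_spec
  have fy : ∀ i : ℤ, f ((π ^ i) y) = (π ^ (i + e)) x := by
    intro i
    have h : π.SameCycle y ((π ^ i) y) := ⟨i, rfl⟩
    have h' : ¬ π.SameCycle x ((π ^ i) y) := fun h' => hxy (h'.trans h.symm)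
    simp only [f, dif_neg h', dif_pos h]
    have := (key _ _).2 h.choose_spec
    rw [add_comm, add_comm i, zpow_add, zpow_add, Perm.mul_apply, Perm.mul_apply, this]
  have fz : ∀ z, ¬ π.SameCycle x z → ¬ π.SameCycle y z → f z = z := by
    intro z h h'
    simp only [f, dif_neg h, dif_neg h']
  have fxs : ∀ z, π.SameCycle x z → π.SameCycle y (f z) := by
    rintro z ⟨i, rfl⟩
    rw [fx]; exact ⟨i, rfl⟩
  have fys : ∀ z, π.SameCycle y z → π.SameCycle x (f z) := by
    rintro z ⟨i, rfl⟩
    rw [fy]; exact ⟨_, rfl⟩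
  have ff : ∀ z, π.SameCycle x z ∨ π.SameCycle y z → f (f z) = (π ^ e) z := by
    rintro z (⟨i, rfl⟩ | ⟨i, rfl⟩)
    · rw [fx, fy, ← Perm.mul_apply, ← zpow_add, add_comm]
    · rw [fy, fx, ← Perm.mul_apply, ← zpow_add, add_comm]
  have reg : ∀ z, (π.SameCycle x (f z) ∨ π.SameCycle y (f z)) ↔
      (π.SameCycle x z ∨ π.SameCycle y z) := by
    intro z
    refine ⟨fun h => ?_, fun h => h.elim (fun h => Or.inr (fxs z h)) (fun h => Or.inl (fys z h))⟩
    by_contra hc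
    push Not at hc
    rw [fz z hc.1 hc.2] at h
    tauto
  have inj : Function.Injective f := by
    intro a b hab
    by_cases ha : π.SameCycle x a ∨ π.SameCycle y a
    · have hb : π.SameCycle x b ∨ π.SameCycle y b := by rwa [← reg b, ← hab, reg a]
      have := ff a ha
      rw [hab, ff b hb] at this
      exact ((π ^ e).injective this).symm
    · have hb : ¬ (π.SameCycle x b ∨ π.SameCycle y b) := by rwa [← reg b, ← hab, reg a]
      push Not at ha hb
      rwa [fz a ha.1 ha.2, fz b hb.1 hb.2] at hab
  have comm : ∀ z, f (π z) = π (f z) := by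
    intro z
    by_cases h1 : π.SameCycle x z
    · obtain ⟨i, rfl⟩ := h1
      rw [fx, ← Perm.mul_apply, ← Perm.mul_apply, ← zpow_one_add, fx]
    by_cases h2 : π.SameCycle y z
    · obtain ⟨i, rfl⟩ := h2
      rw [fy, ← Perm.mul_apply, ← Perm.mul_apply, ← zpow_one_add, fy, ← zpow_one_add, add_assoc]
    rw [fz z h1 h2, fz _ (by rwa [Perm.sameCycle_apply_right])
      (by rwa [Perm.sameCycle_apply_right])]
  refine ⟨Equiv.ofBijective f (Finite.injective_iff_bijective.1 inj), ?_, ?_, ?_, fxs, fys, ff, fz⟩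
  · ext z
    exact comm z
  · simpa using fx 0
  · simpa using fy 0

theorem Equiv.Perm.exists_conj_inv_fixing {α : Type*} [Finite α] (π : Perm α) (x : α) :
    ∃ h : Perm α, h x = x ∧ h * π * h⁻¹ = π⁻¹ := by
  classical
  have := Fintype.ofFinite α
  obtain ⟨k, hk⟩ := isConj_iff.1 (Perm.isConj_iff_cycleType_eq.2 (Perm.cycleType_inv π).symm)
  suffices ∃ z : Perm α, Commute z π ∧ z x = k x by
    obtain ⟨z, hz, hzx⟩ := this
    refine ⟨z⁻¹ * k, by simp [← hzx], ?_⟩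
    have : z⁻¹ * k * π * (z⁻¹ * k)⁻¹ = z⁻¹ * (k * π * k⁻¹) * z := by group
    rw [this, hk]
    have := hz.inv_inv.eq
    rw [this]; group
  by_cases hs : π.SameCycle x (k x)
  · obtain ⟨i, hi⟩ := hs
    exact ⟨π ^ i, (Commute.refl π).zpow_left i, hi⟩
  · have hper : ∀ i : ℤ, (π ^ i) x = x ↔ (π ^ i) (k x) = k x := by
      intro i
      have h1 : k * π ^ i = π ^ (-i) * k := by
        have : k * π ^ i * k⁻¹ = π ^ (-i) := by rw [← conj_zpow, hk]; simp
        rw [← this]; group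
      have h2 : k ((π ^ i) x) = (π ^ (-i)) (k x) := by
        rw [← Perm.mul_apply, h1, Perm.mul_apply]
      have h3 : (π ^ (-i)) (k x) = k x ↔ (π ^ i) (k x) = k x := by
        rw [zpow_neg, Perm.inv_eq_iff_eq, eq_comm]
      rw [← h3, ← h2, EmbeddingLike.apply_eq_iff_eq]
    obtain ⟨t, ht, htx, -⟩ := π.exists_commute_swap_cycles hper hs 0
    exact ⟨t, ht, htx⟩

/-- The permutations `T` supported in `A` which commute with `π` and satisfy `T² = π ^ e` on `A`. -/
def commutingRoots {α : Type*} [Fintype α] [DecidableEq α] (π : Perm α) (e : ℤ) (A : Finset α) :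
    Finset (Perm α) :=
  {T : Perm α | T * π = π * T ∧ (∀ z, z ∉ A → T z = z) ∧ ∀ z ∈ A, T (T z) = (π ^ e) z}

/-- The union of the cycles of `x` and `y`. -/
def cyclesOf {α : Type*} [Fintype α] [DecidableEq α] (π : Perm α) (x y : α) : Finset α :=
  {z | π.SameCycle x z ∨ π.SameCycle y z}

section

variable {α : Type*} [Fintype α] [DecidableEq α] {π : Perm α} {e : ℤ} {A : Finset α} {x y : α}

theorem mem_commutingRoots {T : Perm α} : T ∈ commutingRoots π e A ↔
    T * π = π * T ∧ (∀ z, z ∉ A → T z = z) ∧ ∀ z ∈ A, T (T z) = (π ^ e) z := by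
  simp [commutingRoots]

theorem mem_cyclesOf {z : α} : z ∈ cyclesOf π x y ↔ π.SameCycle x z ∨ π.SameCycle y z := by
  simp [cyclesOf]

theorem apply_mem_iff_of_mem_commutingRoots {T : Perm α} (hT : T ∈ commutingRoots π e A) (z : α) :
    T z ∈ A ↔ z ∈ A := by
  obtain ⟨-, h, -⟩ := mem_commutingRoots.1 hT
  constructor
  · intro h1
    by_contra hz
    rw [h z hz] at h1
    exact hz h1
  · intro hz
    by_contra h1
    have := T.injective (h _ h1)
    rw [this] at h1
    exact h1 hz

theorem apply_zpow_of_mem_commutingRoots {T : Perm α} (hT : T ∈ commutingRoots π e A) (i : ℤ)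
    (z : α) : T ((π ^ i) z) = (π ^ i) (T z) := by
  have h : Commute T π := (mem_commutingRoots.1 hT).1
  rw [← Perm.mul_apply, (h.zpow_right i).eq, Perm.mul_apply]

theorem sum_commutingRoots_fiber {R : Type*} [CommRing R] (s : Perm α → R)
    (hs : ∀ a b : Perm α, a.Disjoint b → s (a * b) = s a * s b)
    (hA : ∀ ⦃z w⦄, π.SameCycle z w → z ∈ A → w ∈ A) (hx : x ∈ A) (hy : y ∈ A) {t : Perm α}
    (ht : t ∈ commutingRoots π e (cyclesOf π x y)) (htx : t x = y) :
    ∑ T ∈ commutingRoots π e A with T x = y, s T =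
      s t * ∑ T ∈ commutingRoots π e (A \ cyclesOf π x y), s T := by
  obtain ⟨ht1, ht2, ht3⟩ := mem_commutingRoots.1 ht
  have htO := apply_mem_iff_of_mem_commutingRoots ht
  have hOA : ∀ z ∈ cyclesOf π x y, z ∈ A := by
    intro z hz
    rcases mem_cyclesOf.1 hz with h | h
    · exact hA h hx
    · exact hA h hy
  have hxO : x ∈ cyclesOf π x y := mem_cyclesOf.2 (Or.inl (Perm.SameCycle.refl _ _))
  have hty : t y = (π ^ e) x := by rw [← htx, ht3 x hxO]
  have ht1' : t⁻¹ * π = π * t⁻¹ := (Commute.inv_left (show Commute t π from ht1)).eq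
  have agree : ∀ T ∈ commutingRoots π e A, T x = y → ∀ z ∈ cyclesOf π x y, T z = t z := by
    intro T hT hTx z hz
    have hTy : T y = (π ^ e) x := by rw [← hTx, (mem_commutingRoots.1 hT).2.2 x hx]
    rcases mem_cyclesOf.1 hz with ⟨i, rfl⟩ | ⟨i, rfl⟩
    · rw [apply_zpow_of_mem_commutingRoots hT, apply_zpow_of_mem_commutingRoots ht, hTx, htx]
    · rw [apply_zpow_of_mem_commutingRoots hT, apply_zpow_of_mem_commutingRoots ht, hTy, hty]
  rw [Finset.mul_sum]
  refine Finset.sum_bij' (fun T _ => t⁻¹ * T) (fun T _ => t * T) ?_ ?_ ?_ ?_ ?_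
  · intro T hT
    rw [Finset.mem_filter] at hT
    obtain ⟨hT, hTx⟩ := hT
    obtain ⟨h1, h2, h3⟩ := mem_commutingRoots.1 hT
    have ag := agree T hT hTx
    have hTO : ∀ z, z ∉ cyclesOf π x y → T z ∉ cyclesOf π x y := by
      intro z hz hTz
      have hw : t⁻¹ (T z) ∈ cyclesOf π x y := by rw [← htO]; simpa using hTz
      have := ag _ hw
      rw [Perm.inv_def, apply_symm_apply, EmbeddingLike.apply_eq_iff_eq] at this
      rw [Perm.inv_def, this] at hw
      exact hz hw
    have off : ∀ z, z ∉ cyclesOf π x y → t⁻¹ (T z) = T z := by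
      intro z hz
      rw [Perm.inv_eq_iff_eq, ht2 _ (hTO z hz)]
    refine mem_commutingRoots.2 ⟨?_, ?_, ?_⟩
    · rw [mul_assoc, h1, ← mul_assoc, ht1', mul_assoc]
    · intro z hz
      by_cases hzO : z ∈ cyclesOf π x y
      · rw [Perm.mul_apply, ag z hzO, Perm.inv_def, symm_apply_apply]
      · have hzA : z ∉ A := fun h => hz (Finset.mem_sdiff.2 ⟨h, hzO⟩)
        rw [Perm.mul_apply, off z hzO, h2 z hzA]
    · intro z hz
      rw [Finset.mem_sdiff] at hz
      rw [Perm.mul_apply, Perm.mul_apply, off z hz.2, off _ (hTO z hz.2), h3 z hz.1]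
  · intro T hT
    obtain ⟨h1, h2, h3⟩ := mem_commutingRoots.1 hT
    have hTA := apply_mem_iff_of_mem_commutingRoots hT
    refine Finset.mem_filter.2 ⟨mem_commutingRoots.2 ⟨?_, ?_, ?_⟩, ?_⟩
    · rw [mul_assoc, h1, ← mul_assoc, ht1, mul_assoc]
    · intro z hz
      rw [Perm.mul_apply, h2 z (by simp [hz]), ht2 z (fun h => hz (hOA z h))]
    · intro z hz
      by_cases hzO : z ∈ cyclesOf π x y
      · rw [Perm.mul_apply, Perm.mul_apply, h2 z (by simp [hzO]),
          h2 (t z) (by simp [(htO z).2 hzO]), ht3 z hzO]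
      · have hz' : z ∈ A \ cyclesOf π x y := Finset.mem_sdiff.2 ⟨hz, hzO⟩
        have hz1 := (hTA z).2 hz'
        have hz2 := (hTA _).2 hz1
        rw [Perm.mul_apply, Perm.mul_apply, ht2 (T z) (Finset.mem_sdiff.1 hz1).2,
          ht2 _ (Finset.mem_sdiff.1 hz2).2, h3 z hz']
    · rw [Perm.mul_apply, h2 x (by simp [hxO]), htx]
  · intro T _
    simp
  · intro T _
    simp
  · intro T hT
    rw [Finset.mem_filter] at hT
    rw [← hs, mul_inv_cancel_left]
    intro z
    by_cases hzO : z ∈ cyclesOf π x y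
    · right
      rw [Perm.mul_apply, agree T hT.1 hT.2 z hzO, Perm.inv_def, symm_apply_apply]
    · exact Or.inl (ht2 z hzO)

theorem period_iff_of_mem_commutingRoots {T : Perm α} (hT : T ∈ commutingRoots π e A)
    (hTx : T x = y) (i : ℤ) : (π ^ i) x = x ↔ (π ^ i) y = y := by
  rw [← hTx, ← apply_zpow_of_mem_commutingRoots hT, EmbeddingLike.apply_eq_iff_eq]

theorem zpow_apply_of_mem_commutingRoots {T : Perm α} (hT : T ∈ commutingRoots π e A) (hx : x ∈ A)
    {j : ℤ} (hTx : T x = (π ^ j) x) : (π ^ (2 * j)) x = (π ^ e) x := by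
  rw [← (mem_commutingRoots.1 hT).2.2 x hx, hTx, apply_zpow_of_mem_commutingRoots hT, hTx,
    ← Perm.mul_apply, ← zpow_add, two_mul]

theorem zpow_cycleOf_mem_commutingRoots {j : ℤ} (h : (π ^ (2 * j)) x = (π ^ e) x)
    (hy : (π ^ j) x = y) :
    (π.cycleOf x) ^ j ∈ commutingRoots π e (cyclesOf π x y) ∧ ((π.cycleOf x) ^ j) x = y := by
  have hc : Commute (π.cycleOf x) π := by
    ext z
    by_cases hz : π.SameCycle x z
    · rw [Perm.mul_apply, Perm.mul_apply, Perm.SameCycle.cycleOf_apply hz,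
        Perm.SameCycle.cycleOf_apply (Perm.sameCycle_apply_right.2 hz)]
    · rw [Perm.mul_apply, Perm.mul_apply, Perm.cycleOf_apply_of_not_sameCycle hz,
        Perm.cycleOf_apply_of_not_sameCycle (by rwa [Perm.sameCycle_apply_right])]
  have hc' : ∀ i j : ℤ, (π.cycleOf x ^ i) ((π ^ j) x) = (π ^ (i + j)) x := by
    intro i j
    rw [← Perm.mul_apply, ((hc.zpow_left i).zpow_right j).eq, Perm.mul_apply,
      Perm.cycleOf_zpow_apply_self, ← Perm.mul_apply, ← zpow_add, add_comm]
  refine ⟨mem_commutingRoots.2 ⟨(hc.zpow_left j).eq, ?_, ?_⟩, ?_⟩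
  · intro z hz
    rw [mem_cyclesOf] at hz
    push Not at hz
    exact Perm.zpow_apply_eq_self_of_apply_eq_self (Perm.cycleOf_apply_of_not_sameCycle hz.1) j
  · intro z hz
    have hz : π.SameCycle x z := by
      rcases mem_cyclesOf.1 hz with h | h
      · exact h
      · exact Perm.SameCycle.trans ⟨j, hy⟩ h
    obtain ⟨i, rfl⟩ := hz
    rw [hc', hc', show j + (j + i) = i + 2 * j by ring, zpow_add, Perm.mul_apply, h,
      ← Perm.mul_apply, ← Perm.mul_apply, ← zpow_add, ← zpow_add, add_comm]
  · rw [Perm.cycleOf_zpow_apply_self, hy]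

theorem sum_commutingRoots_fiber_eq_zero {R : Type*} [CommRing R] (s : Perm α → R) {j : ℤ}
    (hx : x ∈ A) (h : (π ^ (2 * j)) x ≠ (π ^ e) x) :
    ∑ T ∈ commutingRoots π e A with T x = (π ^ j) x, s T = 0 := by
  refine Finset.sum_eq_zero fun T hT => ?_
  rw [Finset.mem_filter] at hT
  exact absurd (zpow_apply_of_mem_commutingRoots hT.1 hx hT.2) h

end

theorem zpow_apply_eq_zpow_apply_iff {α : Type*} {π : Perm α} (x : α) (i j : ℤ) :
    (π ^ i) x = (π ^ j) x ↔ (Function.minimalPeriod π x : ℤ) ∣ i - j := by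
  have h := MulAction.zpow_smul_eq_iff_minimalPeriod_dvd (a := π) (b := x) (n := i - j)
  rw [Perm.smul_def] at h
  refine Iff.trans ?_ h
  rw [sub_eq_neg_add, zpow_add, Perm.mul_apply, zpow_neg, Perm.inv_eq_iff_eq]

theorem sum_commutingRoots_eq_sum_one {α : Type*} [Fintype α] [DecidableEq α] {π : Perm α} {R : Type*} [CommRing R] (s : Perm α → R) (hs_one : s 1 = 1)
    (hs : ∀ a b : Perm α, a.Disjoint b → s (a * b) = s a * s b)
    (hswap : ∀ x y : α, ∀ t ∈ commutingRoots π 0 (cyclesOf π x y), ¬ π.SameCycle x y → t x = y →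
      s t = 1)
    (hhalf : ∀ (x : α) (k : ℕ), Function.minimalPeriod π x = 2 * k →
      s ((π.cycleOf x) ^ (k : ℤ)) = -1)
    (A : Finset α) (hA : ∀ ⦃z w⦄, π.SameCycle z w → z ∈ A → w ∈ A) :
    ∑ T ∈ commutingRoots π 0 A, s T = ∑ T ∈ commutingRoots π 1 A, 1 := by
  induction A using Finset.strongInduction with
  | H A ih =>
  obtain rfl | ⟨x, hx⟩ := A.eq_empty_or_nonempty
  · have : ∀ e : ℤ, commutingRoots π e ∅ = {1} := by
      intro e
      ext T
      rw [mem_commutingRoots, Finset.mem_singleton]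
      constructor
      · rintro ⟨-, h, -⟩
        ext z
        exact h z (by simp)
      · rintro rfl
        simp
    simp [this, hs_one]
  have hmaps : ∀ e : ℤ, ∀ _T ∈ commutingRoots π e A, _T x ∈ A := fun _ _ hT =>
    (apply_mem_iff_of_mem_commutingRoots hT x).2 hx
  have rest : ∀ y ∈ A, ∑ T ∈ commutingRoots π 0 (A \ cyclesOf π x y), s T =
      ∑ T ∈ commutingRoots π 1 (A \ cyclesOf π x y), (1 : R) := by
    intro y hy
    have hxO : x ∈ cyclesOf π x y := mem_cyclesOf.2 (Or.inl (Perm.SameCycle.refl _ _))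
    refine ih _ ⟨Finset.sdiff_subset, fun h => (Finset.mem_sdiff.1 (h hx)).2 hxO⟩ ?_
    intro z w hzw hz
    rw [Finset.mem_sdiff] at hz ⊢
    refine ⟨hA hzw hz.1, fun hw => hz.2 ?_⟩
    rw [mem_cyclesOf] at hw ⊢
    exact hw.imp (fun h => h.trans hzw.symm) (fun h => h.trans hzw.symm)
  rw [← Finset.sum_fiberwise_of_maps_to (hmaps 0), ← Finset.sum_fiberwise_of_maps_to (hmaps 1)]
  rw [← Finset.sum_filter_add_sum_filter_not A (fun y => π.SameCycle x y),
    ← Finset.sum_filter_add_sum_filter_not A (fun y => π.SameCycle x y)]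
  have one_mult : ∀ a b : Perm α, a.Disjoint b → (1 : R) = 1 * 1 := fun _ _ _ => (mul_one 1).symm
  congr 1
  swap
  · refine Finset.sum_congr rfl fun y hy => ?_
    rw [Finset.mem_filter] at hy
    by_cases hper : ∀ i : ℤ, (π ^ i) x = x ↔ (π ^ i) y = y
    · have ex : ∀ e : ℤ, ∃ t ∈ commutingRoots π e (cyclesOf π x y), t x = y := by
        intro e
        obtain ⟨t, h1, h2, -, -, -, h3, h4⟩ := π.exists_commute_swap_cycles hper hy.2 e
        refine ⟨t, mem_commutingRoots.2 ⟨h1, fun z hz => ?_, fun z hz => ?_⟩, h2⟩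
        · rw [mem_cyclesOf, not_or] at hz
          exact h4 z hz.1 hz.2
        · exact h3 z (mem_cyclesOf.1 hz)
      obtain ⟨t₀, h0, h0'⟩ := ex 0
      obtain ⟨t₁, h1, h1'⟩ := ex 1
      rw [sum_commutingRoots_fiber s hs hA hx hy.1 h0 h0',
        sum_commutingRoots_fiber (fun _ => (1 : R)) one_mult hA hx hy.1 h1 h1',
        hswap x y t₀ h0 hy.2 h0', rest y hy.1]
    · have emp : ∀ e : ℤ, {T ∈ commutingRoots π e A | T x = y} = ∅ := by
        intro e
        rw [Finset.filter_eq_empty_iff]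
        intro T hT hTx
        exact hper (period_iff_of_mem_commutingRoots hT hTx)
      rw [emp, emp, Finset.sum_empty, Finset.sum_empty]
  · have hmem : ∀ j : ℤ, (π ^ j) x ∈ {y ∈ A | π.SameCycle x y} := fun j =>
      Finset.mem_filter.2 ⟨hA ⟨j, rfl⟩ hx, ⟨j, rfl⟩⟩
    have hcyc : ∀ j : ℤ, cyclesOf π x ((π ^ j) x) = cyclesOf π x x := by
      intro j
      ext z
      rw [mem_cyclesOf, mem_cyclesOf, Perm.sameCycle_zpow_left]
    obtain ⟨k, hk | hk⟩ := Nat.even_or_odd' (Function.minimalPeriod π x)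
    · rw [Finset.sum_eq_zero (s := {y ∈ A | π.SameCycle x y})
        (f := fun y => ∑ T ∈ commutingRoots π 1 A with T x = y, (1 : R))]
      · have hkpos : 0 < k := by
          have : 0 < Function.minimalPeriod π x :=
            Function.minimalPeriod_pos_of_mem_periodicPts
              (by
                rw [Function.mem_periodicPts]
                exact ⟨orderOf π, orderOf_pos π, by
                  rw [Function.IsPeriodicPt, Function.IsFixedPt, Perm.iterate_eq_pow,
                    pow_orderOf_eq_one, Perm.one_apply]⟩)
          omega
        have hne : x ≠ (π ^ (k : ℤ)) x := by
          have := zpow_apply_eq_zpow_apply_iff (π := π) x 0 k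
          rw [zpow_zero, Perm.one_apply] at this
          rw [Ne, this, hk]
          rintro ⟨c, hc⟩
          push_cast at hc
          have h1 : (k : ℤ) * (2 * c + 1) = 0 := by linarith
          rcases mul_eq_zero.1 h1 with h | h <;> omega
        rw [← Finset.sum_subset (s₁ := {x, (π ^ (k : ℤ)) x}), Finset.sum_pair hne]
        · have h0 := zpow_cycleOf_mem_commutingRoots (π := π) (x := x) (e := 0) (j := 0)
            (by simp) rfl
          have h1 := zpow_cycleOf_mem_commutingRoots (π := π) (x := x) (e := 0) (j := k)
            (by rw [zpow_apply_eq_zpow_apply_iff, hk]; push_cast; simp) rfl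
          have e0 := sum_commutingRoots_fiber s hs hA hx
            (Finset.mem_filter.1 (hmem 0)).1 h0.1 h0.2
          have e1 := sum_commutingRoots_fiber s hs hA hx
            (Finset.mem_filter.1 (hmem k)).1 h1.1 h1.2
          rw [hcyc] at e0 e1
          rw [e1, hhalf x k hk]
          rw [zpow_zero, zpow_zero, Perm.one_apply, hs_one] at e0
          rw [e0]
          ring
        · intro y hy
          rw [Finset.mem_insert, Finset.mem_singleton] at hy
          rcases hy with rfl | rfl
          · simpa using hmem 0
          · exact hmem k
        · intro y hy hy'
          obtain ⟨j, rfl⟩ := (Finset.mem_filter.1 hy).2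
          refine sum_commutingRoots_fiber_eq_zero s hx fun h => hy' ?_
          rw [zpow_apply_eq_zpow_apply_iff, hk] at h
          have h' : (k : ℤ) ∣ j := by
            obtain ⟨c, hc⟩ := h
            push_cast at hc
            exact ⟨c, by linarith⟩
          obtain ⟨c, rfl⟩ := h'
          rw [Finset.mem_insert, Finset.mem_singleton]
          obtain ⟨d, rfl | rfl⟩ := Int.even_or_odd' c
          · left
            have := zpow_apply_eq_zpow_apply_iff (π := π) x ((k : ℤ) * (2 * d)) 0
            rw [zpow_zero, Perm.one_apply] at this
            rw [this, hk]
            exact ⟨d, by push_cast; ring⟩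
          · right
            rw [zpow_apply_eq_zpow_apply_iff, hk]
            exact ⟨d, by push_cast; ring⟩
      · intro y hy
        obtain ⟨j, rfl⟩ := (Finset.mem_filter.1 hy).2
        refine sum_commutingRoots_fiber_eq_zero _ hx fun h => ?_
        rw [zpow_apply_eq_zpow_apply_iff, hk] at h
        obtain ⟨c, hc⟩ := h
        push_cast at hc
        have : 2 * (j - k * c) = 1 := by linarith
        omega
    · rw [Finset.sum_eq_single ((π ^ (0 : ℤ)) x), Finset.sum_eq_single ((π ^ (k + 1 : ℤ)) x)]
      · have h0 := zpow_cycleOf_mem_commutingRoots (π := π) (x := x) (e := 0) (j := 0)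
          (by simp) rfl
        have h1 := zpow_cycleOf_mem_commutingRoots (π := π) (x := x) (e := 1) (j := k + 1)
          (by
            rw [zpow_apply_eq_zpow_apply_iff, hk]
            exact ⟨1, by push_cast; ring⟩) rfl
        have hm0 := (Finset.mem_filter.1 (hmem 0)).1
        have e0 := sum_commutingRoots_fiber s hs hA hx hm0 h0.1 h0.2
        have e1 := sum_commutingRoots_fiber (fun _ => (1 : R)) one_mult hA hx
          (Finset.mem_filter.1 (hmem (k + 1))).1 h1.1 h1.2
        rw [e0, e1, rest _ hm0, hcyc, hcyc, zpow_zero, hs_one]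
      · intro y hy hy'
        obtain ⟨j, rfl⟩ := (Finset.mem_filter.1 hy).2
        refine sum_commutingRoots_fiber_eq_zero _ hx fun h => hy' ?_
        rw [zpow_apply_eq_zpow_apply_iff, hk] at h ⊢
        obtain ⟨c, hc⟩ := h
        push_cast at hc ⊢
        exact ⟨j - k * c - 1, by linear_combination (-k : ℤ) * hc⟩
      · exact fun h => absurd (hmem _) h
      · intro y hy hy'
        obtain ⟨j, rfl⟩ := (Finset.mem_filter.1 hy).2
        refine sum_commutingRoots_fiber_eq_zero s hx fun h => hy' ?_
        rw [zpow_apply_eq_zpow_apply_iff, hk] at h ⊢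
        obtain ⟨c, hc⟩ := h
        push_cast at hc ⊢
        exact ⟨j - k * c, by linear_combination (-k : ℤ) * hc⟩
      · exact fun h => absurd (hmem _) h

theorem invw_eq_card (n : ℕ) (w π : Perm (Fin n)) :
    invw n w π = Finset.card {z : Fin n | z < w z ∧ π (w z) < π z} := by
  have : {p : Fin n × Fin n | p.1 < p.2 ∧ w p.1 = p.2 ∧ π p.2 < π p.1} =
      (fun z => (z, w z)) '' (({z : Fin n | z < w z ∧ π (w z) < π z} : Finset (Fin n)) :
        Set (Fin n)) := by
    ext ⟨a, b⟩
    simp only [Set.mem_ofPred_eq, Finset.coe_filter, Finset.mem_univ, true_and, Set.mem_image,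
      Prod.mk.injEq]
    constructor
    · rintro ⟨h1, rfl, h3⟩
      exact ⟨a, ⟨h1, h3⟩, rfl, rfl⟩
    · rintro ⟨z, ⟨h1, h2⟩, rfl, rfl⟩
      exact ⟨h1, rfl, h2⟩
  rw [invw, this, Set.ncard_image_of_injective _ (fun a b h => (Prod.mk.inj h).1),
    Set.ncard_coe_finset]

theorem invw_mul_of_disjoint (n : ℕ) {a b : Perm (Fin n)} (π : Perm (Fin n)) (h : a.Disjoint b) :
    invw n (a * b) π = invw n a π + invw n b π := by
  rw [invw_eq_card, invw_eq_card, invw_eq_card, ← Finset.card_union_of_disjoint]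
  · congr 1
    ext z
    simp only [Finset.mem_filter_univ, Finset.mem_union]
    rw [Perm.mul_apply]
    rcases h z with hz | hz
    · have : a (b z) = b z := by
        rw [← Perm.mul_apply, h.commute.eq, Perm.mul_apply, hz]
      simp [hz, this]
    · simp [hz]
  · rw [Finset.disjoint_left]
    intro z hz hz'
    simp only [Finset.mem_filter, Finset.mem_univ, true_and] at hz hz'
    rcases h z with h | h
    · rw [h] at hz; exact lt_irrefl _ hz.1
    · rw [h] at hz'; exact lt_irrefl _ hz'.1

/-- The sign recording whether `z` is the smaller or the larger element of the pair `{z, t z}`. -/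
def orientation {n : ℕ} (t : Perm (Fin n)) (z : Fin n) : ℂ := if z < t z then 1 else -1

theorem orientation_mul_self {n : ℕ} (t : Perm (Fin n)) (z : Fin n) :
    orientation t z * orientation t z = 1 := by
  rw [orientation]
  split_ifs <;> norm_num

theorem neg_one_pow_invw_eq_prod {n : ℕ} {t π : Perm (Fin n)} (hc : t * π = π * t)
    (ht : ∀ z, t (t z) = z) (R : Finset (Fin n)) (hR : ∀ z ∈ R, t z ≠ z)
    (hR' : ∀ z, t z ≠ z → (z ∈ R ↔ t z ∉ R)) :
    (-1 : ℂ) ^ invw n t π = ∏ z ∈ R, orientation t z * orientation t (π z) := by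
  have hcz : ∀ z, t (π z) = π (t z) := fun z => Perm.congr_fun hc z
  have hsymm : ∀ z, t z ≠ z → orientation t (t z) = - orientation t z := by
    intro z hz
    rw [orientation, orientation, ht]
    rcases lt_or_gt_of_ne hz with h | h
    · rw [if_pos h, if_neg h.not_gt, neg_neg]
    · rw [if_neg h.not_gt, if_pos h]
  have hh : ∀ z, t z ≠ z → orientation t (t z) * orientation t (π (t z)) =
      orientation t z * orientation t (π z) := by
    intro z hz
    rw [← hcz, hsymm z hz, hsymm (π z) (by rw [hcz]; simpa using hz)]
    ring
  have hL : (-1 : ℂ) ^ invw n t π =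
      ∏ z : Fin n with z < t z, orientation t z * orientation t (π z) := by
    rw [invw_eq_card, ← Finset.prod_const, ← Finset.filter_filter, Finset.prod_filter]
    refine Finset.prod_congr rfl fun z hz => ?_
    have hz : z < t z := (Finset.mem_filter.1 hz).2
    rw [orientation, if_pos hz, orientation, hcz, one_mul]
    have : π z ≠ π (t z) := fun h => hz.ne (π.injective h)
    rcases lt_or_gt_of_ne this with h | h
    · rw [if_neg h.not_gt, if_pos h]
    · rw [if_pos h, if_neg h.not_gt]
  rw [hL]
  refine Finset.prod_bij' (fun z _ => if z ∈ R then z else t z)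
    (fun z _ => if z < t z then z else t z) ?_ ?_ ?_ ?_ ?_
  · intro z hz
    have hz : z < t z := (Finset.mem_filter.1 hz).2
    have := hR' z hz.ne'
    split_ifs with h
    · exact h
    · tauto
  · intro z hz
    have hz := hR z hz
    rw [Finset.mem_filter]
    refine ⟨Finset.mem_univ _, ?_⟩
    split_ifs with h
    · exact h
    · rw [ht]
      exact lt_of_le_of_ne (not_lt.1 h) hz
  · intro z hz
    have hz : z < t z := (Finset.mem_filter.1 hz).2
    split_ifs with h h'
    · rfl
    · rw [ht] at h'; exact absurd hz h'.not_gt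
    · exact ht z
  · intro z hz
    have hz' := hR z hz
    have := hR' z hz'
    split_ifs with h h'
    · rfl
    · tauto
    · exact ht z
  · intro z hz
    have hz : z < t z := (Finset.mem_filter.1 hz).2
    split_ifs with h
    · rfl
    · rw [hh z hz.ne']

theorem neg_one_pow_invw_of_swap {n : ℕ} {t π : Perm (Fin n)} {x y : Fin n}
    (ht : t ∈ commutingRoots π 0 (cyclesOf π x y)) (hxy : ¬ π.SameCycle x y) (htx : t x = y) :
    (-1 : ℂ) ^ invw n t π = 1 := by
  obtain ⟨h1, h2, h3⟩ := mem_commutingRoots.1 ht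
  have hty : t y = x := by
    rw [← htx, h3 x (mem_cyclesOf.2 (Or.inl (Perm.SameCycle.refl _ _)))]
    simp
  have htt : ∀ z, t (t z) = z := by
    intro z
    by_cases hz : z ∈ cyclesOf π x y
    · simpa using h3 z hz
    · rw [h2 z hz, h2 z hz]
  have hX : ∀ z, π.SameCycle x z → π.SameCycle y (t z) := by
    rintro z ⟨i, rfl⟩
    rw [apply_zpow_of_mem_commutingRoots ht, htx]
    exact ⟨i, rfl⟩
  have hY : ∀ z, π.SameCycle y z → π.SameCycle x (t z) := by
    rintro z ⟨i, rfl⟩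
    rw [apply_zpow_of_mem_commutingRoots ht, hty]
    exact ⟨i, rfl⟩
  have hd : ∀ z, π.SameCycle x z → ¬ π.SameCycle y z := fun z h h' => hxy (h.trans h'.symm)
  rw [neg_one_pow_invw_eq_prod h1 htt {z | π.SameCycle x z}]
  · rw [Finset.prod_mul_distrib]
    have : ∏ z with π.SameCycle x z, orientation t (π z) =
        ∏ z with π.SameCycle x z, orientation t z :=
      Finset.prod_equiv π (by simp) (by simp)
    rw [this, ← Finset.prod_mul_distrib]
    exact Finset.prod_eq_one fun z _ => orientation_mul_self t z
  · intro z hz h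
    have hz := (Finset.mem_filter.1 hz).2
    have := hX z hz
    rw [h] at this
    exact hd z hz this
  · intro z hz
    have hz : z ∈ cyclesOf π x y := by
      by_contra h
      exact hz (h2 z h)
    simp only [Finset.mem_filter, Finset.mem_univ, true_and]
    constructor
    · exact fun h h' => hd _ h' (hX z h)
    · intro h
      rcases mem_cyclesOf.1 hz with h' | h'
      · exact h'
      · exact absurd (hY z h') h

theorem neg_one_pow_invw_of_half {n : ℕ} {π : Perm (Fin n)} {x : Fin n} {k : ℕ}
    (hk : Function.minimalPeriod π x = 2 * k) :
    (-1 : ℂ) ^ invw n ((π.cycleOf x) ^ (k : ℤ)) π = -1 := by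
  have hkpos : 0 < k := by
    have : 0 < Function.minimalPeriod π x :=
      Function.minimalPeriod_pos_of_mem_periodicPts
        (by
          rw [Function.mem_periodicPts]
          exact ⟨orderOf π, orderOf_pos π, by
            rw [Function.IsPeriodicPt, Function.IsFixedPt, Perm.iterate_eq_pow,
              pow_orderOf_eq_one, Perm.one_apply]⟩)
    omega
  obtain ⟨ht, htx⟩ := zpow_cycleOf_mem_commutingRoots (π := π) (x := x) (e := 0) (j := k)
    (by rw [zpow_apply_eq_zpow_apply_iff, hk]; push_cast; simp) rfl
  set t := (π.cycleOf x) ^ (k : ℤ)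
  obtain ⟨h1, h2, h3⟩ := mem_commutingRoots.1 ht
  have hO : ∀ z, z ∈ cyclesOf π x ((π ^ (k : ℤ)) x) ↔ π.SameCycle x z := by
    intro z
    rw [mem_cyclesOf, Perm.sameCycle_zpow_left, or_self]
  have htt : ∀ z, t (t z) = z := by
    intro z
    by_cases hz : z ∈ cyclesOf π x ((π ^ (k : ℤ)) x)
    · simpa using h3 z hz
    · rw [h2 z hz, h2 z hz]
  have htp : ∀ i : ℤ, t ((π ^ i) x) = (π ^ (i + k)) x := by
    intro i
    rw [apply_zpow_of_mem_commutingRoots ht, htx, ← Perm.mul_apply, ← zpow_add]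
  have hiff : ∀ i j : ℤ, (π ^ i) x = (π ^ j) x ↔ (2 * k : ℤ) ∣ i - j := by
    intro i j
    rw [zpow_apply_eq_zpow_apply_iff, hk]
    push_cast
    rfl
  have hmov : ∀ i : ℤ, t ((π ^ i) x) ≠ (π ^ i) x := by
    intro i
    rw [htp, Ne, hiff]
    rintro ⟨c, hc⟩
    have h1 : (k : ℤ) * (2 * c - 1) = 0 := by linarith
    rcases mul_eq_zero.1 h1 with h | h <;> omega
  have hinj : ∀ i ∈ Finset.range k, ∀ j ∈ Finset.range k,
      (π ^ (i : ℤ)) x = (π ^ (j : ℤ)) x → i = j := by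
    intro i hi j hj h
    rw [Finset.mem_range] at hi hj
    rw [hiff] at h
    have := Int.eq_zero_of_abs_lt_dvd h (by rw [abs_lt]; constructor <;> omega)
    omega
  rw [neg_one_pow_invw_eq_prod h1 htt ((Finset.range k).image fun i : ℕ => (π ^ (i : ℤ)) x)]
  · rw [Finset.prod_image hinj]
    have tel : ∀ m : ℕ, ∏ i ∈ Finset.range m, orientation t ((π ^ (i : ℤ)) x) *
        orientation t (π ((π ^ (i : ℤ)) x)) = orientation t x * orientation t ((π ^ (m : ℤ)) x) := by
      intro m
      induction m with
      | zero => simp [orientation_mul_self]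
      | succ m ih =>
        rw [Finset.prod_range_succ, ih]
        have : π ((π ^ (m : ℤ)) x) = (π ^ ((m + 1 : ℕ) : ℤ)) x := by
          rw [← Perm.mul_apply, ← zpow_one_add, add_comm]
          norm_cast
        rw [this]
        linear_combination orientation t x * orientation t ((π ^ ((m + 1 : ℕ) : ℤ)) x) *
          orientation_mul_self t ((π ^ (m : ℤ)) x)
    rw [tel, ← htx, orientation, orientation, htt]
    have := hmov 0
    rw [zpow_zero, Perm.one_apply] at this
    rcases lt_or_gt_of_ne this with h | h
    · rw [if_neg h.not_gt, if_pos h]; norm_num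
    · rw [if_pos h, if_neg h.not_gt]; norm_num
  · intro z hz
    obtain ⟨i, -, rfl⟩ := Finset.mem_image.1 hz
    exact hmov i
  · intro z hz
    have hz : z ∈ cyclesOf π x ((π ^ (k : ℤ)) x) := by
      by_contra h
      exact hz (h2 z h)
    obtain ⟨i, rfl⟩ := (hO z).1 hz
    have hmemR : ∀ i : ℤ, (π ^ i) x ∈ (Finset.range k).image (fun i : ℕ => (π ^ (i : ℤ)) x) ↔
        i % (2 * k) < k := by
      intro i
      have hk0 : (0 : ℤ) < 2 * k := by omega
      have hi0 := Int.emod_nonneg i hk0.ne'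
      have hi1 := Int.emod_lt_of_pos i hk0
      rw [Finset.mem_image]
      constructor
      · rintro ⟨a, ha, h⟩
        rw [Finset.mem_range] at ha
        rw [hiff] at h
        have : (a : ℤ) % (2 * k) = i % (2 * k) :=
          Int.emod_eq_emod_iff_emod_sub_eq_zero.2 (Int.emod_eq_zero_of_dvd h)
        rw [← this, Int.emod_eq_of_lt (by omega) (by omega)]
        exact_mod_cast ha
      · intro h
        refine ⟨(i % (2 * k)).toNat, by rw [Finset.mem_range]; omega, ?_⟩
        rw [Int.toNat_of_nonneg hi0, hiff]
        exact ⟨-(i / (2 * k)), by linear_combination (Int.emod_add_mul_ediv i (2 * k))⟩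
    rw [htp, hmemR, hmemR]
    have hk0 : (0 : ℤ) < 2 * k := by omega
    have e1 := Int.emod_add_mul_ediv i (2 * k)
    have hi0 := Int.emod_nonneg i hk0.ne'
    have hi1 := Int.emod_lt_of_pos i hk0
    by_cases h : i % (2 * k) < k
    · have : (i + k) % (2 * k) = i % (2 * k) + k := by
        rw [Int.emod_eq_iff hk0.ne']
        refine ⟨by omega, by omega, ⟨-(i / (2 * k)), by linear_combination e1⟩⟩
      rw [this]
      omega
    · have : (i + k) % (2 * k) = i % (2 * k) - k := by
        rw [Int.emod_eq_iff hk0.ne']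
        refine ⟨by omega, by omega,
          ⟨-(i / (2 * k)) - 1, by linear_combination e1⟩⟩
      rw [this]
      omega

/-- The signed number of involutions commuting with `π` is the number of square roots of `π`. -/
theorem sum_neg_one_pow_invw_eq_card_sqrt (n : ℕ) (π : Perm (Fin n)) :
    ∑ w : SymInv n with conjInv n π w = w, (-1 : ℂ) ^ invw n w.1 π =
      (Finset.card {σ : Perm (Fin n) | σ * σ = π} : ℂ) := by
  have h := sum_commutingRoots_eq_sum_one (π := π) (fun w => (-1 : ℂ) ^ invw n w π)
    (by
      have : invw n 1 π = 0 := by simp [invw_eq_card]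
      simp [this])
    (fun a b hab => by simp only [invw_mul_of_disjoint n π hab, pow_add])
    (fun x y t ht hxy htx => neg_one_pow_invw_of_swap ht hxy htx)
    (fun x k hk => neg_one_pow_invw_of_half hk) Finset.univ (fun _ _ _ _ => Finset.mem_univ _)
  have h1 : commutingRoots π 1 Finset.univ =
      ({σ : Perm (Fin n) | σ * σ = π} : Finset (Perm (Fin n))) := by
    ext σ
    rw [mem_commutingRoots, Finset.mem_filter]
    simp only [Finset.mem_univ, not_true_eq_false, false_imp_iff, implies_true, true_and,
      forall_const, zpow_one]
    constructor
    · rintro ⟨-, h⟩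
      ext z
      rw [Perm.mul_apply, h z]
    · rintro rfl
      exact ⟨mul_assoc _ _ _ |>.symm, fun z => rfl⟩
  rw [h1, Finset.sum_const, nsmul_eq_mul, mul_one] at h
  rw [← h]
  refine Finset.sum_bij (fun w _ => w.1) ?_ ?_ ?_ ?_
  · intro w hw
    have hw := congrArg Subtype.val (Finset.mem_filter.1 hw).2
    have hw : π * w.1 * π⁻¹ = w.1 := hw
    rw [mem_commutingRoots]
    refine ⟨?_, by simp, fun z _ => ?_⟩
    · rw [mul_inv_eq_iff_eq_mul] at hw
      exact hw.symm
    · rw [zpow_zero, ← Perm.mul_apply, w.2]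
  · intro a _ b _ hab
    exact Subtype.ext hab
  · intro b hb
    obtain ⟨h1, -, h3⟩ := mem_commutingRoots.1 hb
    have hbb : b * b = 1 := by
      ext z
      rw [Perm.mul_apply, h3 z (Finset.mem_univ _), zpow_zero]
    refine ⟨⟨b, hbb⟩, ?_, rfl⟩
    rw [Finset.mem_filter]
    refine ⟨Finset.mem_univ _, Subtype.ext ?_⟩
    change π * b * π⁻¹ = b
    rw [← h1, mul_inv_cancel_right]
  · intro w _
    rfl

/-- Burnside's theorem: the operators of an irreducible representation span all operators. -/
theorem Representation.IsIrreducible.span_range_eq_top {G V : Type*} [Group G] [AddCommGroup V]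
    [Module ℂ V] [FiniteDimensional ℂ V] (ρ : Representation ℂ G V) [ρ.IsIrreducible] :
    Submodule.span ℂ (Set.range ρ) = ⊤ := by
  classical
  rw [eq_top_iff]
  intro T _
  have hbij : Function.Bijective
      (algebraMap ℂ (Module.End (MonoidAlgebra ℂ G) ρ.asModule)) :=
    IsSimpleModule.algebraMap_end_bijective_of_isAlgClosed ℂ
  let f : Module.End (Module.End (MonoidAlgebra ℂ G) ρ.asModule) ρ.asModule :=
    { toFun := fun v => ρ.asModuleEquiv.symm (T (ρ.asModuleEquiv v))
      map_add' := fun v w => by simp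
      map_smul' := fun a v => by
        obtain ⟨c, rfl⟩ := hbij.2 a
        simp }
  have b := Module.finBasis ℂ V
  obtain ⟨r, hr⟩ := jacobson_density f
    (Finset.univ.image fun i => ρ.asModuleEquiv.symm (b i))
  have hT : T = ρ.asAlgebraHom r := by
    refine b.ext fun i => ?_
    have := hr (ρ.asModuleEquiv.symm (b i)) (Finset.mem_image_of_mem _ (Finset.mem_univ i))
    exact congrArg ρ.asModuleEquiv this
  rw [hT, Representation.asAlgebraHom_def, MonoidAlgebra.lift_apply]
  exact Submodule.sum_mem _ fun g _ =>
    Submodule.smul_mem _ _ (Submodule.subset_span ⟨g, rfl⟩)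

theorem Representation.IsIrreducible.finrank_intertwiningMap_dual {G V : Type*} [Group G]
    [Finite G] [AddCommGroup V] [Module ℂ V] [FiniteDimensional ℂ V] (ρ : Representation ℂ G V)
    [ρ.IsIrreducible] (hinv : ∀ g : G, IsConj g g⁻¹) :
    Module.finrank ℂ (Representation.IntertwiningMap ρ ρ.dual) = 1 := by
  cases nonempty_fintype G
  have : Invertible (Nat.card G : ℂ) := invertibleOfNonzero (by simp)
  have h1 := Representation.card_inv_mul_sum_char_mul_char_eq_finrank ρ ρ.dual
  have h2 := Representation.card_inv_mul_sum_char_mul_char_eq_finrank ρ ρ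
  rw [Representation.IsIrreducible.finrank_intertwiningMap_self] at h2
  have hχ : ∀ g, ρ.character g⁻¹ = ρ.character g := fun g => by
    obtain ⟨k, hk⟩ := isConj_iff.1 (hinv g)
    rw [← hk, Representation.char_conj]
  simp only [Representation.char_dual, hχ] at h1 h2
  exact_mod_cast h1.symm.trans h2

/-- Every nonzero representation of `G` carries a nonzero invariant symmetric bilinear form. -/
def HasInvariantSymmForms (G : Type*) [Group G] : Prop :=
  ∀ (U : Type) [AddCommGroup U] [Module ℂ U] [FiniteDimensional ℂ U] [Nontrivial U]
    (ρ : Representation ℂ G U), ∃ B : U →ₗ[ℂ] U →ₗ[ℂ] ℂ, B ≠ 0 ∧ (∀ x y, B x y = B y x) ∧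
      ∀ g x y, B (ρ g x) (ρ g y) = B x y

theorem HasInvariantSymmForms.of_subsingleton (G : Type*) [Group G] [Subsingleton G] :
    HasInvariantSymmForms G := by
  intro U _ _ _ _ ρ
  obtain ⟨v, hv⟩ := exists_ne (0 : U)
  obtain ⟨φ, hφ⟩ : ∃ φ : Module.Dual ℂ U, φ v ≠ 0 := by
    by_contra! h
    exact hv ((Module.forall_dual_apply_eq_zero_iff ℂ v).1 h)
  refine ⟨(LinearMap.mul ℂ ℂ).compl₁₂ φ φ, fun e => ?_, fun x y => ?_, fun g x y => ?_⟩
  · simpa [hφ] using LinearMap.congr_fun₂ e v v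
  · simp [mul_comm]
  · rw [Subsingleton.elim g 1, map_one]
    rfl

/-- To produce invariant symmetric forms, it suffices to treat irreducible representations. -/
theorem HasInvariantSymmForms.of_irreducible {G : Type*} [Group G]
    (h : ∀ (U : Type) [AddCommGroup U] [Module ℂ U] [FiniteDimensional ℂ U]
      (ρ : Representation ℂ G U) [ρ.IsIrreducible],
      ∃ B : U →ₗ[ℂ] U →ₗ[ℂ] ℂ, B ≠ 0 ∧ (∀ x y, B x y = B y x) ∧
        ∀ g x y, B (ρ g x) (ρ g y) = B x y) :
    HasInvariantSymmForms G := by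
  intro U _ _ _ _ ρ
  induction hd : Module.finrank ℂ U using Nat.strong_induction_on generalizing U with
  | _ d ih =>
  by_cases hirr : ρ.IsIrreducible
  · exact h U ρ
  obtain ⟨W, hW0, hW1⟩ : ∃ W : Subrepresentation ρ, W ≠ ⊥ ∧ W ≠ ⊤ := by
    by_contra! hc
    have : Nontrivial (Subrepresentation ρ) := by
      refine ⟨⊥, ⊤, fun hbt => ?_⟩
      have := congrArg Subrepresentation.toSubmodule hbt
      exact bot_ne_top this
    exact hirr { eq_bot_or_eq_top := fun W => or_iff_not_imp_left.2 (hc W) }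
  have hW0' : W.toSubmodule ≠ ⊥ := fun e => hW0 (Subrepresentation.toSubmodule_injective e)
  have hW1' : W.toSubmodule ≠ ⊤ := fun e => hW1 (Subrepresentation.toSubmodule_injective e)
  have : Nontrivial (U ⧸ W.toSubmodule) := Submodule.Quotient.nontrivial_iff.2 hW1'
  obtain ⟨B, hB0, hBs, hBi⟩ := ih (Module.finrank ℂ (U ⧸ W.toSubmodule))
    (by
      have h1 := Submodule.finrank_quotient_add_finrank W.toSubmodule
      have h2 : 0 < Module.finrank ℂ W.toSubmodule :=
        Nat.pos_of_ne_zero fun e => hW0' (Submodule.finrank_eq_zero.1 e)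
      omega)
    (U ⧸ W.toSubmodule) (ρ.quotient W.toSubmodule fun g _ hv => W.apply_mem_toSubmodule g hv) rfl
  refine ⟨B.compl₁₂ W.toSubmodule.mkQ W.toSubmodule.mkQ, fun e => hB0 ?_, fun x y => hBs _ _,
    fun g x y => hBi g (W.toSubmodule.mkQ x) (W.toSubmodule.mkQ y)⟩
  ext x y
  exact LinearMap.congr_fun₂ e x y

theorem HasInvariantSymmForms.of_conj_inv {G K : Type*} [Group G] [Finite G] [Group K] [Finite K]
    (ι : K →* G) (hι : ∀ g, ∃ k, ι k * g * (ι k)⁻¹ = g⁻¹) (hK : HasInvariantSymmForms K) :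
    HasInvariantSymmForms G := by
  refine .of_irreducible fun U _ _ _ ρ _ => ?_
  cases nonempty_fintype K
  have : Nontrivial U := by
    have := (IsSimpleModule.nontrivial (MonoidAlgebra ℂ G) ρ.asModule)
    exact this
  have hdual := Representation.IsIrreducible.finrank_intertwiningMap_dual ρ
    fun g => isConj_iff.2 ((hι g).imp' ι fun _ h => h)
  obtain ⟨f, hf⟩ : ∃ f : Representation.IntertwiningMap ρ ρ.dual, f ≠ 0 := by
    have : Nontrivial (Representation.IntertwiningMap ρ ρ.dual) :=
      Module.nontrivial_of_finrank_pos (R := ℂ) (by omega)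
    exact exists_ne 0
  have hfinj := (Representation.IsIrreducible.injective_or_eq_zero f).resolve_right hf
  let B : U →ₗ[ℂ] U →ₗ[ℂ] ℂ := f.toLinearMap
  have hBinj : Function.Injective B := hfinj
  have hBinv : ∀ g x y, B (ρ g x) (ρ g y) = B x y := by
    intro g x y
    have := congrArg (fun φ : Module.Dual ℂ U => φ (ρ g y)) (f.isIntertwining ρ ρ.dual g x)
    simpa [Representation.dual_apply, Module.Dual.transpose_apply, B] using this
  have hBinv' : ∀ g x y, B (ρ g x) y = B x (ρ g⁻¹ y) := by
    intro g x y
    rw [← hBinv g x]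
    simp
  by_cases hsymm : ∃ x y, B x y + B y x ≠ 0
  · obtain ⟨x, y, hxy⟩ := hsymm
    refine ⟨B + B.flip, fun e => hxy ?_, fun x y => ?_, fun g x y => ?_⟩
    · exact LinearMap.congr_fun₂ e x y
    · simp [add_comm]
    · simp [hBinv]
  push Not at hsymm
  exfalso
  obtain ⟨C, hC0, hCs, hCi⟩ := hK U (ρ.comp ι)
  let e : U ≃ₗ[ℂ] Module.Dual ℂ U :=
    LinearEquiv.ofInjectiveOfFinrankEq B hBinj Subspace.dual_finrank_eq.symm
  let A : U →ₗ[ℂ] U := e.symm.toLinearMap ∘ₗ C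
  have hA : ∀ x y, B (A x) y = C x y := by
    intro x y
    have : e (A x) = C x := e.apply_symm_apply _
    exact LinearMap.congr_fun this y
  have hsa : ∀ (T : U →ₗ[ℂ] U) x y, ∑ k : K, B (T (ρ (ι k) x)) (ρ (ι k) y) =
      ∑ k : K, B (ρ (ι k) x) (T (ρ (ι k) y)) := by
    intro T x y
    have hT : T ∈ Submodule.span ℂ (Set.range ρ) := by
      rw [Representation.IsIrreducible.span_range_eq_top]; trivial
    induction hT using Submodule.span_induction with
    | mem T hT =>
      obtain ⟨g, rfl⟩ := hT
      obtain ⟨h, hh⟩ := hι g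
      have h1 : ∀ a, B (ρ g (ρ a x)) (ρ a y) = B x (ρ (a⁻¹ * g⁻¹ * a) y) := fun a => by
        rw [hBinv', hBinv', map_mul, map_mul]; rfl
      have h2 : ∀ a, B (ρ a x) (ρ g (ρ a y)) = B x (ρ (a⁻¹ * g * a) y) := fun a => by
        rw [hBinv', map_mul, map_mul]; rfl
      simp only [h1, h2]
      rw [← Equiv.sum_comp (Equiv.mulLeft h)]
      refine Finset.sum_congr rfl fun k _ => ?_
      have h3 : (ι (h * k))⁻¹ * g⁻¹ * ι (h * k) = (ι k)⁻¹ * g * ι k := by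
        rw [← hh, map_mul]; group
      rw [Equiv.coe_mulLeft, h3]
    | zero => simp
    | add S T _ _ hS hT => simp [Finset.sum_add_distrib, hS, hT]
    | smul c T _ hT => simp [← Finset.mul_sum, hT]
  apply hC0
  ext x y
  have h1 := hsa A x y
  have h2 : ∀ k, B (ρ (ι k) x) (A (ρ (ι k) y)) = - C x y := by
    intro k
    rw [eq_neg_of_add_eq_zero_left (hsymm _ _), hA, hCs]
    exact congrArg _ (hCi k x y)
  have h3 : ∀ k, B (A (ρ (ι k) x)) (ρ (ι k) y) = C x y := by
    intro k
    rw [hA]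
    exact hCi k x y
  simp only [h2, h3, Finset.sum_const, smul_neg] at h1
  have h4 := self_eq_neg.1 h1
  simpa using h4

theorem hasInvariantSymmForms_perm (α : Type) [Finite α] : HasInvariantSymmForms (Perm α) := by
  classical
  induction hc : Nat.card α generalizing α with
  | zero =>
    have := Finite.card_eq_zero_iff.1 hc
    exact .of_subsingleton _
  | succ m ih =>
    have : Nonempty α := (Nat.card_pos_iff.1 (by omega)).1
    obtain ⟨x⟩ := this
    refine .of_conj_inv (Perm.ofSubtype (p := fun y => y ≠ x)) (fun π => ?_) (ih {y // y ≠ x} ?_)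
    · obtain ⟨h, hx, hh⟩ := Perm.exists_conj_inv_fixing π x
      refine ⟨h.subtypePerm fun y => ?_, ?_⟩
      · constructor
        · rintro h1 rfl
          exact h1 hx
        · exact fun h1 h2 => h1 (h.injective (h2.trans hx.symm))
      · rw [Perm.ofSubtype_subtypePerm]
        · exact hh
        · rintro y hy rfl
          exact hy hx
    · cases nonempty_fintype α
      rw [Nat.card_eq_fintype_card] at hc ⊢
      rw [Fintype.card_subtype_compl, Fintype.card_subtype_eq, hc, Nat.add_sub_cancel]

/-- The trace of `B ↦ (x, y) ↦ B (a y) (a x)` on bilinear forms is the trace of `a²`. -/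
theorem trace_lflip_comp_dualMap_comp {U : Type*} [AddCommGroup U] [Module ℂ U]
    [FiniteDimensional ℂ U] (a : U →ₗ[ℂ] U) (T : Module.End ℂ (U →ₗ[ℂ] U →ₗ[ℂ] ℂ))
    (hT : ∀ B x y, T B x y = B (a y) (a x)) :
    LinearMap.trace ℂ _ T = LinearMap.trace ℂ U (a * a) := by
  classical
  let b := Module.finBasis ℂ U
  let β := (Matrix.stdBasis ℂ (Fin (Module.finrank ℂ U)) (Fin (Module.finrank ℂ U))).map
    (LinearMap.toMatrix₂ (σ₁ := RingHom.id ℂ) (σ₂ := RingHom.id ℂ) b b).symm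
  have hβ : ∀ i j x y, β (i, j) x y = b.repr x i * b.repr y j := by
    intro i j x y
    simp only [β, Module.Basis.map_apply, Matrix.stdBasis_eq_single, LinearMap.toMatrix₂_symm]
    rw [Matrix.toLinearMap₂_apply]
    simp [Matrix.single_apply, ite_and]
  have hr : ∀ B i j, β.repr B (i, j) = B (b i) (b j) := by
    intro B i j
    simp [β, Matrix.stdBasis, LinearMap.toMatrix₂_apply]
  rw [LinearMap.trace_eq_matrix_trace ℂ β, LinearMap.trace_eq_matrix_trace ℂ b,
    LinearMap.toMatrix_mul, Matrix.trace, Matrix.trace, Fintype.sum_prod_type]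
  refine Finset.sum_congr rfl fun i _ => ?_
  rw [Matrix.diag_apply, Matrix.mul_apply]
  refine Finset.sum_congr rfl fun j _ => ?_
  rw [Matrix.diag_apply, LinearMap.toMatrix_apply, hr, hT, hβ, LinearMap.toMatrix_apply,
    LinearMap.toMatrix_apply]

/-- The Frobenius–Schur indicator of a self-dual irreducible representation carrying an
invariant symmetric form is `1`. -/
theorem sum_character_sq {G : Type*} [Group G] [Fintype G] (hG : HasInvariantSymmForms G)
    (hinv : ∀ g : G, IsConj g g⁻¹) {U : Type} [AddCommGroup U] [Module ℂ U]
    [FiniteDimensional ℂ U] (ρ : Representation ℂ G U) [ρ.IsIrreducible] :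
    ∑ g : G, ρ.character (g * g) = Nat.card G := by
  have : Invertible (Nat.card G : ℂ) := invertibleOfNonzero (by simp)
  have : Invertible (Fintype.card G : ℂ) := invertibleOfNonzero (by simp)
  have : Nontrivial U := IsSimpleModule.nontrivial (MonoidAlgebra ℂ G) ρ.asModule
  obtain ⟨B, hB0, hBs, hBi⟩ := hG U ρ
  let τ : Representation ℂ G (U →ₗ[ℂ] U →ₗ[ℂ] ℂ) := Representation.linHom ρ ρ.dual
  have hτ : ∀ g C x y, τ g C x y = C (ρ g⁻¹ x) (ρ g⁻¹ y) := by
    intro g C x y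
    simp [τ, Representation.linHom_apply, Representation.dual_apply, Module.Dual.transpose_apply]
  have hdim : Module.finrank ℂ τ.invariants = 1 := by
    rw [(Representation.invariantsEquivIntertwiningMap ρ ρ.dual).finrank_eq]
    exact Representation.IsIrreducible.finrank_intertwiningMap_dual ρ hinv
  have hBmem : B ∈ τ.invariants := by
    intro g
    ext x y
    rw [hτ, hBi]
  have hsymm : ∀ C ∈ τ.invariants, C.flip = C := by
    intro C hC
    obtain ⟨c, hc⟩ := exists_smul_eq_of_finrank_eq_one hdim (x := ⟨B, hBmem⟩)
      (fun e => hB0 (congrArg Subtype.val e)) ⟨C, hC⟩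
    have : c • B = C := congrArg Subtype.val hc
    rw [← this]
    ext x y
    simp [hBs x y]
  let F : Module.End ℂ (U →ₗ[ℂ] U →ₗ[ℂ] ℂ) := LinearMap.lflip.toLinearMap
  have hF : ∀ C x y, F C x y = C y x := fun C x y => rfl
  have hP : F * τ.averageMap = τ.averageMap := by
    apply LinearMap.ext
    intro C
    exact hsymm _ (τ.averageMap_invariant C)
  have hfree : Module.Free ℂ τ.invariants := Module.Free.of_divisionRing ℂ τ.invariants
  have hfree' : Module.Free ℂ τ.averageMap.ker :=
    Module.Free.of_divisionRing ℂ τ.averageMap.ker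
  have htr := (Representation.isProj_averageMap τ).trace
  rw [← hP, hdim] at htr
  have havg : F * τ.averageMap = (Fintype.card G : ℂ)⁻¹ • ∑ g : G, F * τ g := by
    rw [← Finset.mul_sum, ← mul_smul_comm]
    congr 1
    simp [GroupAlgebra.average, map_sum]
  rw [havg, map_smul, map_sum] at htr
  have hg : ∀ g, LinearMap.trace ℂ _ (F * τ g) = ρ.character (g⁻¹ * g⁻¹) := by
    intro g
    rw [Representation.character, map_mul ρ]
    refine trace_lflip_comp_dualMap_comp _ _ fun C x y => ?_
    rw [Module.End.mul_apply, hF, hτ]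
  simp only [hg] at htr
  have hsum : ∑ g : G, ρ.character (g⁻¹ * g⁻¹) = ∑ g : G, ρ.character (g * g) :=
    Equiv.sum_comp (Equiv.inv G) fun g => ρ.character (g * g)
  rw [hsum] at htr
  rw [Nat.card_eq_fintype_card]
  rw [smul_eq_mul, inv_mul_eq_iff_eq_mul₀ (by simp)] at htr
  simpa using htr

/-- The module attached to the representation given by a module `M` is `M` itself. -/
noncomputable def Representation.asModuleOfModuleEquiv (G M : Type*) [Group G] [AddCommGroup M]
    [Module ℂ M] [Module (MonoidAlgebra ℂ G) M] [IsScalarTower ℂ (MonoidAlgebra ℂ G) M] :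
    (Representation.ofModule' (k := ℂ) (G := G) M).asModule ≃ₗ[MonoidAlgebra ℂ G] M :=
  { (Representation.ofModule' (k := ℂ) (G := G) M).asModuleEquiv with
    map_smul' := fun r x => by
      have : (Representation.ofModule' (k := ℂ) (G := G) M).asAlgebraHom =
          Algebra.lsmul ℂ ℂ M :=
        (MonoidAlgebra.lift ℂ (M →ₗ[ℂ] M) G).apply_symm_apply _
      change (Representation.ofModule' (k := ℂ) (G := G) M).asAlgebraHom r _ = r • _
      rw [this]
      rfl }

/-- A real simple module pairs with a module whose character counts square roots exactly once. -/
theorem exists_linearMap_of_character_eq_card_sqrt {G : Type*} [Group G] [Fintype G]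
    [DecidableEq G] (hG : HasInvariantSymmForms G) (hinv : ∀ g : G, IsConj g g⁻¹)
    {S : Type} {V : Type*} [AddCommGroup S] [Module (MonoidAlgebra ℂ G) S]
    [IsSimpleModule (MonoidAlgebra ℂ G) S] [AddCommGroup V] [Module ℂ V] [FiniteDimensional ℂ V]
    [Module (MonoidAlgebra ℂ G) V] [IsScalarTower ℂ (MonoidAlgebra ℂ G) V]
    (hV : ∀ g, (Representation.ofModule' (k := ℂ) (G := G) V).character g =
      Finset.card {σ : G | σ * σ = g}) :
    ∃ f : S →ₗ[MonoidAlgebra ℂ G] V, f ≠ 0 ∧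
      ∀ g : S →ₗ[MonoidAlgebra ℂ G] V, ∃ c : ℂ, ∀ s : S, g s = c • f s := by
  let _ : Module ℂ S := Module.compHom S (algebraMap ℂ (MonoidAlgebra ℂ G))
  have : IsScalarTower ℂ (MonoidAlgebra ℂ G) S := ⟨fun c a s => by
    rw [Algebra.smul_def, mul_smul]
    rfl⟩
  have : FiniteDimensional ℂ (MonoidAlgebra ℂ G) :=
    inferInstance
  have : FiniteDimensional ℂ S := Module.Finite.trans (MonoidAlgebra ℂ G) S
  let ρ : Representation ℂ G S := Representation.ofModule' S
  let σ : Representation ℂ G V := Representation.ofModule' V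
  let eS := Representation.asModuleOfModuleEquiv G S
  let eV := Representation.asModuleOfModuleEquiv G V
  have : ρ.IsIrreducible := by
    rw [Representation.irreducible_iff_isSimpleModule_asModule]
    exact IsSimpleModule.congr eS
  have : Invertible (Nat.card G : ℂ) := invertibleOfNonzero (by simp)
  have hdim : Module.finrank ℂ (Representation.IntertwiningMap ρ σ) = 1 := by
    have h := Representation.card_inv_mul_sum_char_mul_char_eq_finrank ρ σ
    have hχ : ∀ g, ρ.character g⁻¹ = ρ.character g := fun g => by
      obtain ⟨k, hk⟩ := isConj_iff.1 (hinv g)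
      rw [← hk, Representation.char_conj]
    have hs : ∑ g, σ.character g * ρ.character g⁻¹ = Nat.card G := by
      rw [← sum_character_sq hG hinv ρ,
        ← Finset.sum_fiberwise_of_maps_to (s := Finset.univ) (t := Finset.univ)
          (g := fun s : G => s * s) (f := fun s => ρ.character (s * s)) (fun _ _ => Finset.mem_univ _)]
      refine Finset.sum_congr rfl fun g _ => ?_
      rw [hχ, hV, ← nsmul_eq_mul, ← Finset.sum_const]
      refine Finset.sum_congr rfl fun s hs => ?_
      rw [(Finset.mem_filter.1 hs).2]
    rw [hs, inv_mul_cancel₀ (by simp)] at h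
    exact_mod_cast h.symm
  obtain ⟨F, hF0, hF⟩ := finrank_eq_one_iff'.1 hdim
  let E := Representation.IntertwiningMap.equivLinearMapAsModule ρ σ
  refine ⟨eV.toLinearMap ∘ₗ E F ∘ₗ eS.symm.toLinearMap, fun h => hF0 ?_, fun g => ?_⟩
  · ext s
    exact LinearMap.congr_fun h s
  · obtain ⟨c, hc⟩ := hF (E.symm (eV.symm.toLinearMap ∘ₗ g ∘ₗ eS.toLinearMap))
    refine ⟨c, fun s => ?_⟩
    exact (congrArg (fun H : Representation.IntertwiningMap ρ σ => H s) hc).symm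


/-- The `ℂ[Sₙ]`-module `Vₙ` given by `π · I_w = (−1)^{inv_w(π)} I_{πwπ⁻¹}` (extended
linearly to the group algebra) is a Gelfand model for `ℂ[Sₙ]`: for every simple
`ℂ[Sₙ]`-module `S`, the space `Hom_{ℂ[Sₙ]}(S, Vₙ)` is one-dimensional over `ℂ`. -/
theorem gelfand_model_CSn (n : ℕ) (hn : 1 ≤ n)
    [Module (MonoidAlgebra ℂ (Equiv.Perm (Fin n))) (Vn n)]
    [IsScalarTower ℂ (MonoidAlgebra ℂ (Equiv.Perm (Fin n))) (Vn n)]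
    (hact : ∀ (π : Equiv.Perm (Fin n)) (w : SymInv n),
      (MonoidAlgebra.of ℂ (Equiv.Perm (Fin n)) π) • (Finsupp.single w (1 : ℂ) : Vn n) =
        ((-1 : ℂ) ^ invw n w.1 π) • Finsupp.single (conjInv n π w) (1 : ℂ)) :
    ∀ (S : Type) [AddCommGroup S] [Module (MonoidAlgebra ℂ (Equiv.Perm (Fin n))) S]
      [IsSimpleModule (MonoidAlgebra ℂ (Equiv.Perm (Fin n))) S],
      ∃ f : S →ₗ[MonoidAlgebra ℂ (Equiv.Perm (Fin n))] Vn n, f ≠ 0 ∧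
        ∀ g : S →ₗ[MonoidAlgebra ℂ (Equiv.Perm (Fin n))] Vn n,
          ∃ c : ℂ, ∀ s : S, g s = c • f s := by
  intro S _ _ _
  have hinv : ∀ g : Perm (Fin n), IsConj g g⁻¹ := fun g => by
    rw [Perm.isConj_iff_cycleType_eq, Perm.cycleType_inv]
  refine exists_linearMap_of_character_eq_card_sqrt (hasInvariantSymmForms_perm (Fin n)) hinv
    fun π => ?_
  rw [← sum_neg_one_pow_invw_eq_card_sqrt, Representation.character,
    LinearMap.trace_eq_matrix_trace ℂ Finsupp.basisSingleOne, Matrix.trace, Finset.sum_filter]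
  refine Finset.sum_congr rfl fun w _ => ?_
  have h : Representation.ofModule' (k := ℂ) (Vn n) π (Finsupp.single w 1) =
      ((-1 : ℂ) ^ invw n w.1 π) • Finsupp.single (conjInv n π w) (1 : ℂ) := hact π w
  rw [Matrix.diag_apply, LinearMap.toMatrix_apply, Finsupp.coe_basisSingleOne, h]
  simp [Finsupp.single_apply]
end

section
/- For every n ≥ 1, the ℂ[ISₙ]-module V obtained by extending linearly the action x · I_w = (−1)^{inv_w(x)} I_{x w x⁻¹} if dom(w) ⊆ dom(x) and x · I_w = 0 otherwise, is a Gelfand model for the semigroup algebra ℂ[ISₙ]: for every simple ℂ[ISₙ]-module S, dim_ℂ Hom_{ℂ[ISₙ]}(S, V) = 1. -/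
open Equiv

/-- The symmetric inverse semigroup `ISₙ`: partial injective maps of `{0, …, n−1}`
(modelled as partial equivalences `Fin n ≃. Fin n`), under composition of partial
maps: `(x * y)(a) = x(y(a))`. -/
abbrev ISn (n : ℕ) : Type := PEquiv (Fin n) (Fin n)

noncomputable instance ISnMonoid (n : ℕ) : Monoid (ISn n) where
  one := PEquiv.refl (Fin n)
  mul x y := y.trans x
  mul_assoc x y z := (PEquiv.trans_assoc z y x).symm
  one_mul x := PEquiv.trans_refl x
  mul_one x := PEquiv.refl_trans x

@[simp] theorem ISn.mul_def {n : ℕ} (x y : ISn n) : x * y = y.trans x := rfl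
@[simp] theorem ISn.one_def {n : ℕ} : (1 : ISn n) = PEquiv.refl (Fin n) := rfl

/-- Involutions in `ISₙ`: elements mapping their domain bijectively to itself with
`w(w(a)) = a` for all `a` in the domain; equivalently, `w.symm = w`. -/
abbrev ISInv (n : ℕ) : Type := {w : ISn n // w.symm = w}

/-- `V`: the complex vector space with basis `{I_w : w an involution in ISₙ}`. -/
abbrev VIS (n : ℕ) : Type := ISInv n →₀ ℂ

/-- Conjugation `x w x⁻¹` of an involution `w ∈ ISₙ` by an element `x ∈ ISₙ`
(as a partial map, `a ↦ x(w(x⁻¹(a)))`; when `dom(w) ⊆ dom(x)` this is the involution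
with domain `x(dom(w))` sending `x(a) ↦ x(w(a))` for `a ∈ dom(w)`). -/
def conjIS {n : ℕ} (x : ISn n) (w : ISInv n) : ISInv n :=
  ⟨(x.symm.trans w.1).trans x, by
    rw [PEquiv.symm_trans_rev, PEquiv.symm_trans_rev, PEquiv.symm_symm, w.2,
      PEquiv.trans_assoc]⟩

/-- Conjugation `π w π⁻¹` of an involution `w ∈ ISₙ` by a permutation `π ∈ Sₙ`:
the involution with domain `π(dom(w))` sending `π(a) ↦ π(w(a))` for `a ∈ dom(w)`. -/
def conjPermIS {n : ℕ} (π : Equiv.Perm (Fin n)) (w : ISInv n) : ISInv n :=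
  conjIS π.toPEquiv w

/-- `inv_w(x) = |{(a,b) : a < b, w(a) = b, x(a) > x(b)}|`. -/
noncomputable def invIS {n : ℕ} (w : ISInv n) (x : ISn n) : ℕ :=
  {p : Fin n × Fin n | p.1 < p.2 ∧ w.1 p.1 = some p.2 ∧
    ∃ u v : Fin n, x p.1 = some u ∧ x p.2 = some v ∧ v < u}.ncard

/-- A nonzero finite-dimensional commutative real algebra with a positive definite trace form
contains an idempotent generating a one-dimensional ideal. -/
lemma exists_idempotent_spanning_ideal {R : Type*} [Ring R] [Algebra ℝ R] (C : Submodule ℝ R)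
    [FiniteDimensional ℝ C] (hmul : ∀ a ∈ C, ∀ b ∈ C, a * b ∈ C)
    (hcomm : ∀ a ∈ C, ∀ b ∈ C, a * b = b * a) (φ : R →ₗ[ℝ] ℝ)
    (hpos : ∀ c ∈ C, c ≠ 0 → 0 < φ (c * c)) (hne : C ≠ ⊥) :
    ∃ p ∈ C, p ≠ 0 ∧ p * p = p ∧ ∀ c ∈ C, ∃ r : ℝ, c * p = r • p := by
  let core : InnerProductSpace.Core ℝ C :=
    { inner := fun a b => φ (a * b)
      conj_inner_symm := fun a b => by
        simp [hcomm a a.2 b b.2]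
      re_inner_nonneg := fun a => by
        by_cases h : (a : R) = 0
        · simp [h]
        · simpa using (hpos a a.2 h).le
      add_left := fun a b c => by simp [add_mul]
      smul_left := fun a b r => by simp
      definite := fun a h => by
        by_contra h0
        exact (hpos a a.2 (by simpa using h0)).ne' h }
  let : NormedAddCommGroup C := core.toNormedAddCommGroup
  let : InnerProductSpace ℝ C := InnerProductSpace.ofCore core.toCore
  have inner_def : ∀ a b : C, inner ℝ a b = φ (a * b) := fun _ _ => rfl
  let T : C → C →ₗ[ℝ] C := fun c =>
    { toFun := fun a => ⟨c * a, hmul c c.2 a a.2⟩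
      map_add' := fun a b => by ext; simp [mul_add]
      map_smul' := fun r a => by ext; simp }
  have hT : ∀ c, (T c).IsSymmetric := fun c a b => by
    rw [inner_def, inner_def]
    change φ ((c * a) * b) = φ (a * (c * b))
    rw [hcomm c c.2 a a.2, mul_assoc]
  have hC : Pairwise (Function.onFun Commute T) := fun c d _ => by
    ext a
    change (c * (d * a) : R) = d * (c * a)
    rw [← mul_assoc, ← mul_assoc, hcomm c c.2 d d.2]
  have htop := LinearMap.IsSymmetric.iSup_iInf_eq_top_of_commute hT hC
  obtain ⟨χ, hχ⟩ : ∃ χ : C → ℝ, (⨅ i, Module.End.eigenspace (T i) (χ i)) ≠ ⊥ := by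
    by_contra! h
    simp only [h, iSup_bot] at htop
    have := Submodule.nontrivial_iff_ne_bot.2 hne
    exact bot_ne_top htop
  obtain ⟨v, hv, hv0⟩ := Submodule.exists_mem_ne_zero_of_ne_bot hχ
  have hev : ∀ c : C, (c * v : R) = χ c • (v : R) := fun c => by
    have := Module.End.mem_eigenspace_iff.1 ((Submodule.mem_iInf _).1 hv c)
    exact congrArg Subtype.val this
  have hv0' : (v : R) ≠ 0 := by simpa using hv0
  have hχv : χ v ≠ 0 := fun h => by
    have := hpos v v.2 hv0'
    rw [hev v, h] at this
    simp at this
  refine ⟨(χ v)⁻¹ • (v : R), C.smul_mem _ v.2, by simp [hχv, hv0], ?_, fun c hc => ⟨χ ⟨c, hc⟩, ?_⟩⟩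
  · rw [smul_mul_smul_comm, hev v, smul_smul]
    congr 1
    field_simp
  · rw [mul_smul_comm, hev ⟨c, hc⟩, smul_comm]

/-- An idempotent all of whose corner elements are fixed by a positive anti-involution is a sum of
idempotents fixed by that anti-involution and having one-dimensional corners. -/
lemma idempotent_mem_closure_primitive {R : Type*} [Ring R] [Algebra ℝ R] [FiniteDimensional ℝ R]
    (τ : R →ₗ[ℝ] R) (hτ : ∀ a b, τ (a * b) = τ b * τ a) (φ : R →ₗ[ℝ] ℝ)
    (hpos : ∀ a, a ≠ 0 → 0 < φ (τ a * a)) (n : ℕ) :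
    ∀ f : R, f * f = f → (∀ a, τ (f * a * f) = f * a * f) →
      Module.finrank ℝ (LinearMap.range (LinearMap.mulLeft ℝ f ∘ₗ LinearMap.mulRight ℝ f)) ≤ n →
      f ∈ AddSubmonoid.closure {p : R | p * p = p ∧ τ p = p ∧ ∀ a, ∃ r : ℝ, p * a * p = r • p} := by
  induction n with
  | zero =>
    intro f hf _ hn
    have h0 := Submodule.finrank_eq_zero.1 (Nat.le_zero.1 hn)
    have : f ∈ LinearMap.range (LinearMap.mulLeft ℝ f ∘ₗ LinearMap.mulRight ℝ f) :=
      ⟨f, by simp [hf]⟩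
    rw [h0, Submodule.mem_bot] at this
    rw [this]
    exact zero_mem _
  | succ n ih =>
    intro f hf hfix hn
    by_cases f0 : f = 0
    · rw [f0]; exact zero_mem _
    set C := LinearMap.range (LinearMap.mulLeft ℝ f ∘ₗ LinearMap.mulRight ℝ f) with hCdef
    have hfC : f ∈ C := ⟨f, by simp [hf]⟩
    have hmem : ∀ a, a ∈ C ↔ f * a = a ∧ a * f = a := fun a => by
      constructor
      · rintro ⟨b, rfl⟩
        simp [← mul_assoc, hf]
        simp [mul_assoc, hf]
      · rintro ⟨h1, h2⟩
        exact ⟨a, by simp [h1, h2]⟩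
    have hτC : ∀ a ∈ C, τ a = a := fun a ha => by
      obtain ⟨h1, h2⟩ := (hmem a).1 ha
      have := hfix a
      rwa [h1, h2] at this
    have hmul : ∀ a ∈ C, ∀ b ∈ C, a * b ∈ C := fun a ha b hb => by
      rw [hmem] at ha hb ⊢
      exact ⟨by rw [← mul_assoc, ha.1], by rw [mul_assoc, hb.2]⟩
    obtain ⟨p, hpC, hp0, hpp, hpc⟩ := exists_idempotent_spanning_ideal C hmul
      (fun a ha b hb => by rw [← hτC _ (hmul a ha b hb), hτ, hτC a ha, hτC b hb]) φ
      (fun c hc h0 => by have := hpos c h0; rwa [hτC c hc] at this)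
      (fun h => f0 (by rw [h] at hfC; simpa using hfC))
    obtain ⟨hfp, hpf⟩ := (hmem p).1 hpC
    have hsub : ∀ a, (f - p) * a * (f - p) = f * ((f - p) * a * (f - p)) * f := fun a => by
      have h1 : f * (f - p) = f - p := by rw [mul_sub, hf, hfp]
      have h2 : (f - p) * f = f - p := by rw [sub_mul, hf, hpf]
      calc (f - p) * a * (f - p) = (f * (f - p)) * a * ((f - p) * f) := by rw [h1, h2]
        _ = _ := by simp only [mul_assoc]
    have hidem : (f - p) * (f - p) = f - p := by
      rw [mul_sub, sub_mul, sub_mul, hf, hfp, hpf, hpp]; simp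
    have key : f - p ∈ AddSubmonoid.closure
        {p : R | p * p = p ∧ τ p = p ∧ ∀ a, ∃ r : ℝ, p * a * p = r • p} := by
      refine ih (f - p) hidem (fun a => by rw [hsub, hfix]) ?_
      have hlt : LinearMap.range (LinearMap.mulLeft ℝ (f - p) ∘ₗ LinearMap.mulRight ℝ (f - p)) <
          C := by
        refine lt_of_le_of_ne ?_ fun h => ?_
        · rintro _ ⟨a, rfl⟩
          refine ⟨(f - p) * a * (f - p), ?_⟩
          have := hsub a
          simp only [LinearMap.comp_apply, LinearMap.mulLeft_apply, LinearMap.mulRight_apply]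
          rw [← mul_assoc, ← this, mul_assoc]
        · rw [← h] at hpC
          obtain ⟨a, ha⟩ := hpC
          simp only [LinearMap.comp_apply, LinearMap.mulLeft_apply, LinearMap.mulRight_apply] at ha
          apply hp0
          have h3 : p * (f - p) = 0 := by rw [mul_sub, hpf, hpp, sub_self]
          rw [← hpp]
          nth_rw 2 [← ha]
          rw [← mul_assoc, h3, zero_mul]
      have := Submodule.finrank_lt_finrank_of_lt hlt
      omega
    have hpmem : p ∈ {p : R | p * p = p ∧ τ p = p ∧ ∀ a, ∃ r : ℝ, p * a * p = r • p} := by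
      refine ⟨hpp, hτC p hpC, fun a => ?_⟩
      have hac : p * a * p ∈ C := by
        rw [hmem]
        exact ⟨by rw [← mul_assoc, ← mul_assoc, hfp], by rw [mul_assoc, hpf]⟩
      obtain ⟨r, hr⟩ := hpc _ hac
      exact ⟨r, by rw [← hr, mul_assoc _ p p, hpp]⟩
    have := add_mem key (AddSubmonoid.subset_closure hpmem)
    rwa [sub_add_cancel] at this

/-- The linear extension of a self-map of a monoid to the monoid algebra. -/
noncomputable def extendLinear (k : Type*) {M : Type*} [CommSemiring k] (i : M → M) :
    MonoidAlgebra k M →ₗ[k] MonoidAlgebra k M :=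
  MonoidAlgebra.mapDomainLinearMap k k i

@[simp] lemma extendLinear_single {k M : Type*} [CommSemiring k] (i : M → M) (m : M) (r : k) :
    extendLinear k i (MonoidAlgebra.single m r) = MonoidAlgebra.single (i m) r := by
  simp [extendLinear]

lemma extendLinear_mul {k M : Type*} [CommSemiring k] [Monoid M] {i : M → M}
    (hi : ∀ a b, i (a * b) = i b * i a) (a b : MonoidAlgebra k M) :
    extendLinear k i (a * b) = extendLinear k i b * extendLinear k i a := by
  induction a using MonoidAlgebra.induction_linear with
  | zero => simp
  | add a a' h h' => simp only [add_mul, mul_add, map_add, h, h']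
  | single m r =>
    induction b using MonoidAlgebra.induction_linear with
    | zero => simp
    | add a a' h h' => simp only [add_mul, mul_add, map_add, h, h']
    | single m' r' => simp [MonoidAlgebra.single_mul_single, hi, mul_comm]

lemma extendLinear_extendLinear {k M : Type*} [CommSemiring k] {i : M → M}
    (hi : Function.Involutive i) (a : MonoidAlgebra k M) :
    extendLinear k i (extendLinear k i a) = a := by
  induction a using MonoidAlgebra.induction_linear with
  | zero => simp
  | add a a' h h' => simp only [map_add, h, h']
  | single m r => simp [hi m]

/-- Idempotents of a real group algebra that are fixed by inversion and have one-dimensional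
corners. -/
def primitiveIdempotents (G : Type*) [Group G] : Set (MonoidAlgebra ℝ G) :=
  {p | p * p = p ∧ extendLinear ℝ (·⁻¹) p = p ∧ ∀ a, ∃ r : ℝ, p * a * p = r • p}

lemma exists_corner_coefficient {G : Type*} [Group G] {p : MonoidAlgebra ℝ G}
    (hp : p ∈ primitiveIdempotents G) (h0 : p ≠ 0) :
    ∃ c : G → ℝ, (∀ g, p * MonoidAlgebra.single g 1 * p = c g • p) ∧ c 1 = 1 ∧
      ∀ g, c g⁻¹ = c g := by
  obtain ⟨hpp, hτ, hc⟩ := hp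
  choose c hc using fun g : G => hc (MonoidAlgebra.single g 1)
  refine ⟨c, hc, ?_, fun g => ?_⟩
  · have := hc 1
    rw [← MonoidAlgebra.one_def, mul_one, hpp] at this
    exact (smul_left_injective ℝ h0 (by simpa using this)).symm
  · have h1 := congrArg (extendLinear ℝ (·⁻¹)) (hc g)
    rw [extendLinear_mul mul_inv_rev, extendLinear_mul mul_inv_rev, hτ, map_smul, hτ,
      extendLinear_single, ← mul_assoc, hc] at h1
    exact smul_left_injective ℝ h0 h1

lemma coeff_one_extendLinear_inv_mul {G : Type*} [Group G] [Fintype G] (a b : MonoidAlgebra ℝ G) :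
    (extendLinear ℝ (·⁻¹) a * b).coeff 1 = ∑ g, a.coeff g * b.coeff g := by
  classical
  induction a using MonoidAlgebra.induction_linear with
  | zero => simp
  | add a a' h h' => simp [add_mul, h, h', Finset.sum_add_distrib]
  | single m r =>
    induction b using MonoidAlgebra.induction_linear with
    | zero => simp
    | add a a' h h' => simp only [mul_add, MonoidAlgebra.coeff_add, Finsupp.add_apply, h, h',
        Finset.sum_add_distrib]
    | single m' r' =>
      simp [MonoidAlgebra.single_mul_single, Finsupp.single_apply, inv_mul_eq_one]
      exact fun h h' => absurd h' h

/-- If every element of `G` is conjugate to its inverse under the image of `H`, the property that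
the identity is a sum of primitive idempotents passes from `H` to `G`. -/
lemma one_mem_closure_primitiveIdempotents_of_hom {H G : Type*} [Group H] [Group G] [Finite H]
    [Finite G] (ι : H →* G) (hι : ∀ g, ∃ h, ι h * g * (ι h)⁻¹ = g⁻¹)
    (h1 : 1 ∈ AddSubmonoid.closure (primitiveIdempotents H)) :
    1 ∈ AddSubmonoid.closure (primitiveIdempotents G) := by
  have := Fintype.ofFinite G
  have := Fintype.ofFinite H
  suffices h : ∀ e ∈ AddSubmonoid.closure (primitiveIdempotents H),
      MonoidAlgebra.mapDomainRingHom ℝ ι e ∈ AddSubmonoid.closure (primitiveIdempotents G) by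
    simpa using h 1 h1
  intro e he
  induction he using AddSubmonoid.closure_induction with
  | zero => simp
  | add x y _ _ hx hy => rw [map_add]; exact add_mem hx hy
  | mem e he =>
    by_cases e0 : e = 0
    · simp [e0]
    obtain ⟨c, hc, hc1, hcinv⟩ := exists_corner_coefficient he e0
    set τ : MonoidAlgebra ℝ G →ₗ[ℝ] MonoidAlgebra ℝ G := extendLinear ℝ (·⁻¹) with hτ
    set E := MonoidAlgebra.mapDomainRingHom ℝ ι e with hE
    have hEE : E * E = E := by rw [hE, ← map_mul, he.1]
    have hτE : τ E = E := by
      have : ∀ x, τ (MonoidAlgebra.mapDomainRingHom ℝ ι x) =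
          MonoidAlgebra.mapDomainRingHom ℝ ι (extendLinear ℝ (·⁻¹) x) := fun x => by
        induction x using MonoidAlgebra.induction_linear with
        | zero => simp
        | add a a' h h' => simp only [map_add, h, h']
        | single m r => simp [hτ]
      rw [hE, this, he.2.1]
    have hEh : ∀ h, E * MonoidAlgebra.single (ι h) 1 * E = c h • E := fun h => by
      have := congrArg (MonoidAlgebra.mapDomainRingHom ℝ ι) (hc h)
      rw [map_mul, map_mul] at this
      simpa [hE, MonoidAlgebra.mapDomain_smul] using this
    let N : MonoidAlgebra ℝ G → MonoidAlgebra ℝ G := fun a =>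
      ∑ h, MonoidAlgebra.single (ι h) 1 * a * MonoidAlgebra.single (ι h⁻¹) 1
    have hN : ∀ a, τ (N a) = N a := fun a => by
      induction a using MonoidAlgebra.induction_linear with
      | zero => simp [N]
      | add a a' h h' =>
        have : N (a + a') = N a + N a' := by simp [N, mul_add, add_mul, Finset.sum_add_distrib]
        rw [this, map_add, h, h']
      | single g r =>
        obtain ⟨h₀, hh⟩ := hι g
        have : ∀ h, τ (MonoidAlgebra.single (ι h) 1 * MonoidAlgebra.single g r *
            MonoidAlgebra.single (ι h⁻¹) 1) = MonoidAlgebra.single (ι (h * h₀)) 1 *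
            MonoidAlgebra.single g r * MonoidAlgebra.single (ι (h * h₀)⁻¹) 1 := fun h => by
          have : ι h₀ * (g * (ι h₀)⁻¹) = g⁻¹ := by rw [← hh, mul_assoc]
          simp [MonoidAlgebra.single_mul_single, hτ, mul_assoc, ← this]
        simp only [N, map_sum, this]
        exact _root_.Equiv.sum_comp (Equiv.mulRight h₀) (fun h => MonoidAlgebra.single (ι h) 1 *
          MonoidAlgebra.single g r * MonoidAlgebra.single (ι h⁻¹) 1)
    have hfix : ∀ b, τ (E * b * E) = E * b * E := fun b => by
      have key : E * N (E * b * E) * E = (∑ h, c h ^ 2) • (E * b * E) := by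
        simp only [N, Finset.mul_sum, Finset.sum_mul, Finset.sum_smul]
        refine Finset.sum_congr rfl fun h _ => ?_
        calc _ = (E * MonoidAlgebra.single (ι h) 1 * E) * b *
              (E * MonoidAlgebra.single (ι h⁻¹) 1 * E) := by simp only [mul_assoc]
          _ = _ := by
            rw [hEh, hEh, hcinv, sq, mul_smul]
            simp only [smul_mul_assoc, mul_smul_comm]
      have hpos : 0 < ∑ h, c h ^ 2 :=
        Finset.sum_pos' (fun h _ => sq_nonneg _) ⟨1, Finset.mem_univ _, by simp [hc1]⟩
      have h2 := congrArg τ key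
      rw [hτ, extendLinear_mul mul_inv_rev, extendLinear_mul mul_inv_rev, ← hτ, hτE, hN, map_smul,
        ← mul_assoc, key] at h2
      exact (smul_right_injective _ hpos.ne' h2).symm
    refine idempotent_mem_closure_primitive τ (extendLinear_mul mul_inv_rev)
      ((Finsupp.lapply (1 : G)) ∘ₗ (MonoidAlgebra.coeffLinearEquiv ℝ).toLinearMap) (fun a ha => ?_)
      _ E hEE hfix le_rfl
    have := coeff_one_extendLinear_inv_mul a a
    change 0 < (τ a * a).coeff 1
    rw [this]
    obtain ⟨g, hg⟩ : ∃ g, a.coeff g ≠ 0 := by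
      by_contra! h
      exact ha (by ext g; simpa using h g)
    exact Finset.sum_pos' (fun g _ => mul_self_nonneg _)
      ⟨g, Finset.mem_univ _, mul_self_pos.2 hg⟩

/-- Every permutation is conjugate to its inverse by a permutation fixing a prescribed point. -/
lemma exists_fixing_conj_eq_inv {α : Type*} (g : Perm α) (a : α) :
    ∃ h : Perm α, h a = a ∧ h * g * h⁻¹ = g⁻¹ := by
  classical
  obtain ⟨c, hc, hcs, hca⟩ : ∃ c : α → α, (∀ x, ∃ i : ℤ, (g ^ i) (c x) = x) ∧
      (∀ x y, g.SameCycle x y → c x = c y) ∧ c a = a := by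
    refine ⟨fun x => if g.SameCycle a x then a else
      (Quotient.mk (Perm.SameCycle.setoid g) x).out, fun x => ?_, fun x y hxy => ?_, ?_⟩
    · dsimp only
      split_ifs with h
      · exact h
      · exact Quotient.mk_out (s := Perm.SameCycle.setoid g) x
    · have h1 : g.SameCycle a x ↔ g.SameCycle a y :=
        ⟨fun h => h.trans hxy, fun h => h.trans hxy.symm⟩
      have h2 : Quotient.mk (Perm.SameCycle.setoid g) x = Quotient.mk (Perm.SameCycle.setoid g) y :=
        Quotient.sound hxy
      simp only [h1, h2]
    · simp [Perm.SameCycle.refl]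
  choose i hi using hc
  let h : α → α := fun x => (g ^ (-i x)) (c x)
  have hh : ∀ x (k : ℤ), (g ^ k) (c x) = x → h x = (g ^ (-k)) (c x) := fun x k hk => by
    have h1 : (g ^ k) (c x) = (g ^ (i x)) (c x) := by rw [hk, hi]
    change (g ^ (-i x)) (c x) = _
    rw [zpow_neg, Perm.inv_eq_iff_eq, zpow_neg, ← Perm.mul_apply, ← zpow_neg, ← zpow_add, add_comm,
      zpow_add, Perm.mul_apply, ← h1, zpow_neg]
    simp
  have hcc : ∀ x (k : ℤ), c ((g ^ k) (c x)) = c x := fun x k =>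
    hcs _ _ (((Perm.sameCycle_zpow_left).2 (Perm.SameCycle.refl g _)).trans ⟨i x, hi x⟩)
  have hinv : Function.Involutive h := fun x => by
    have := hh (h x) (-i x) (by rw [hcc])
    rw [this, hcc, neg_neg, hi]
  have hg : ∀ x, h (g x) = g⁻¹ (h x) := fun x => by
    have h1 : c (g x) = c x := hcs _ _ ((Perm.sameCycle_apply_left).2 (Perm.SameCycle.refl g x))
    rw [hh (g x) (1 + i x) (by rw [h1, zpow_add, Perm.mul_apply, hi, zpow_one]), h1, neg_add,
      zpow_add, Perm.mul_apply, zpow_neg_one]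
  refine ⟨hinv.toPerm h, ?_, ?_⟩
  · have := hh a 0 (by simp [hca])
    simpa [hca] using this
  · rw [mul_inv_eq_iff_eq_mul]
    ext x
    exact hg x

/-- In the real group algebra of a finite symmetric group the identity is a sum of primitive
idempotents fixed by inversion. -/
lemma one_mem_closure_primitiveIdempotents_perm (α : Type) [Fintype α] :
    1 ∈ AddSubmonoid.closure (primitiveIdempotents (Perm α)) := by
  refine Fintype.induction_empty_option
    (P := fun α _ => 1 ∈ AddSubmonoid.closure (primitiveIdempotents (Perm α)))
    (fun α β _ e ih => ?_) ?_ (fun α _ ih => ?_) α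
  · have := Finite.of_equiv β e.symm
    refine one_mem_closure_primitiveIdempotents_of_hom e.permCongrHom.toMonoidHom (fun g => ?_) ih
    rcases isEmpty_or_nonempty β with h | ⟨⟨b⟩⟩
    · exact ⟨1, Subsingleton.elim _ _⟩
    · obtain ⟨h, -, hh⟩ := exists_fixing_conj_eq_inv g b
      exact ⟨e.permCongrHom.symm h, by
        change e.permCongrHom (e.permCongrHom.symm h) * g *
          (e.permCongrHom (e.permCongrHom.symm h))⁻¹ = g⁻¹
        rw [MulEquiv.apply_symm_apply, hh]⟩
  · have h : ∀ a : MonoidAlgebra ℝ (Perm PEmpty), ∃ r : ℝ, a = r • 1 := fun a =>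
      ⟨a.coeff 1, by
        refine MonoidAlgebra.coeff_injective (Finsupp.ext fun g => ?_)
        obtain rfl := Subsingleton.elim 1 g
        simp⟩
    refine AddSubmonoid.subset_closure ⟨one_mul _, ?_, fun a => ?_⟩
    · simp [MonoidAlgebra.one_def]
    · simpa using h a
  · let ι : Perm α →* Perm (Option α) := MonoidHom.mk' (fun σ => optionCongr σ) fun σ τ => by
      ext x : 1
      cases x <;> rfl
    refine one_mem_closure_primitiveIdempotents_of_hom ι (fun g => ?_) ih
    obtain ⟨h, h0, hh⟩ := exists_fixing_conj_eq_inv g none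
    refine ⟨removeNone h, ?_⟩
    have : ι (removeNone h) = h := by
      refine Equiv.ext fun x => ?_
      cases x with
      | none => exact h0.symm
      | some x =>
        refine removeNone_some h (Option.ne_none_iff_exists'.1 fun hx => ?_)
        simpa using h.injective (hx.trans h0.symm)
    rw [this, hh]

/-- The number of pairs exchanged by `w` whose order is reversed by `π`. -/
def pairInversions {α : Type*} [Fintype α] [LinearOrder α] (w π : Perm α) : ℕ :=
  (Finset.univ.filter fun p : α × α => p.1 < p.2 ∧ w p.1 = p.2 ∧ π p.2 < π p.1).card

section Parity

variable {α : Type*} [Fintype α] [LinearOrder α] {w π : Perm α}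

lemma pairInversions_mod_two (hπ : ∀ x, π (π x) = x) (hw : ∀ x, w (w x) = x)
    (hc : ∀ x, π (w x) = w (π x)) :
    (pairInversions w π : ZMod 2) =
      (Finset.univ.filter fun p : α × α => p.1 < p.2 ∧ w p.1 = p.2 ∧ π p.1 = p.2).card := by
  have h1 : ∑ p ∈ Finset.univ.filter
      (fun p : α × α => p.1 < p.2 ∧ w p.1 = p.2 ∧ π p.2 < π p.1),
      (if π p.1 = p.2 then (0 : ZMod 2) else 1) = 0 := by
    refine Finset.sum_involution (fun p _ => (π p.2, π p.1)) ?_ ?_ ?_ ?_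
    · rintro ⟨a, b⟩ -
      have : (π (π b) = π a) ↔ (π a = b) := by rw [hπ]; exact eq_comm
      simp only [this]
      split_ifs
      · simp
      · exact CharTwo.add_self_eq_zero _
    · rintro ⟨a, b⟩ - h h'
      simp only [Prod.mk.injEq] at h'
      simp [h'.2] at h
    · rintro ⟨a, b⟩ h
      simp only [Finset.mem_filter, Finset.mem_univ, true_and] at h ⊢
      refine ⟨h.2.2, ?_, by rw [hπ, hπ]; exact h.1⟩
      rw [← hc, ← h.2.1, hw]
    · rintro ⟨a, b⟩ -
      simp [hπ]
  rw [pairInversions, Finset.card_eq_sum_ones, Finset.card_eq_sum_ones, Nat.cast_sum, Nat.cast_sum]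
  have h2 : (Finset.univ.filter fun p : α × α => p.1 < p.2 ∧ w p.1 = p.2 ∧ π p.1 = p.2) =
      (Finset.univ.filter (fun p : α × α => p.1 < p.2 ∧ w p.1 = p.2 ∧ π p.2 < π p.1)).filter
        fun p => π p.1 = p.2 := by
    ext ⟨a, b⟩
    simp only [Finset.mem_filter, Finset.mem_univ, true_and]
    constructor
    · rintro ⟨h1, h2, h3⟩
      refine ⟨⟨h1, h2, ?_⟩, h3⟩
      rw [← h3, hπ, h3]; exact h1
    · rintro ⟨⟨h1, h2, -⟩, h3⟩
      exact ⟨h1, h2, h3⟩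
  rw [h2, Finset.sum_filter (fun p : α × α => π p.1 = p.2), ← sub_eq_zero, ← Finset.sum_sub_distrib]
  refine Eq.trans (Finset.sum_congr rfl fun p _ => ?_) h1
  split_ifs <;> simp

lemma even_pairInversions (hπ : ∀ x, π (π x) = x) (hw : ∀ x, w (w x) = x)
    (hc : ∀ x, π (w x) = w (π x)) (h : ∀ a, w a = π a → π a = a) :
    (pairInversions w π : ZMod 2) = 0 := by
  rw [pairInversions_mod_two hπ hw hc, Finset.card_eq_zero.2, Nat.cast_zero]
  refine Finset.filter_eq_empty_iff.2 ?_
  rintro ⟨a, b⟩ - ⟨h1, h2, h3⟩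
  have := h a (h2.trans h3.symm)
  exact h1.ne (this.symm.trans h3)

lemma odd_pairInversions (hπ : ∀ x, π (π x) = x) (hw : ∀ x, w (w x) = x)
    (hc : ∀ x, π (w x) = w (π x)) {v : α} (hv : π v ≠ v) (hwv : w v = π v)
    (h : ∀ a, w a = π a → π a ≠ a → a = v ∨ a = π v) :
    (pairInversions w π : ZMod 2) = 1 := by
  have hwv' : w (π v) = v := by rw [← hwv, hw]
  rw [pairInversions_mod_two hπ hw hc]
  have : (Finset.univ.filter fun p : α × α => p.1 < p.2 ∧ w p.1 = p.2 ∧ π p.1 = p.2) =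
      {(min v (π v), max v (π v))} := by
    ext ⟨a, b⟩
    simp only [Finset.mem_filter, Finset.mem_univ, true_and, Finset.mem_singleton, Prod.mk.injEq]
    constructor
    · rintro ⟨h1, h2, h3⟩
      rcases h a (h2.trans h3.symm) (by rw [h3]; exact h1.ne') with rfl | rfl
      · rw [← h3] at h1 ⊢
        simp [h1.le]
      · rw [hπ] at h3
        rw [← h3] at h1 ⊢
        simp [h1.le]
    · rintro ⟨rfl, rfl⟩
      rcases lt_or_gt_of_ne hv with h1 | h1
      · simp [h1.le, h1, hwv', hπ]
      · simp [h1.le, h1, hwv]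
  rw [this]
  simp

end Parity

lemma exists_commuting_involution [Fintype α] [LinearOrder α] {w w' : Perm α} {C : ℤ → α → α}
    (h0 : ∀ x, C 0 x = x) (hadd : ∀ i j x, C i (C j x) = C (i + j) x) (hw : ∀ x, w (w x) = x)
    (hwC : ∀ i x, w (C i x) = C (-i) (w x)) (hw' : ∀ x, w' x = w (C 1 x)) {u : α}
    (hu : w u = u) {q : ℤ} (hq : 0 < q) (hper : ∀ i, C i u = u ↔ 2 * q ∣ i) :
    ∃ π : Perm α, (∀ x, π (π x) = x) ∧ (∀ x, π (w x) = w (π x)) ∧ (∀ x, π (w' x) = w' (π x)) ∧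
      (∀ x, w x = x → w' x = x → π x = x) ∧
      (pairInversions w π + pairInversions w' π : ZMod 2) = 1 := by
  classical
  have heq : ∀ i j, C i u = C j u ↔ 2 * q ∣ i - j := fun i j => by
    rw [← hper]
    constructor
    · intro h
      rw [show i - j = -j + i by ring, ← hadd, h, hadd]
      simpa using h0 u
    · intro h
      rw [show i = j + (i - j) by ring, ← hadd, h]
  let P : α → α := fun x => if ∃ i, x = C i u then C q x else x
  have hP : ∀ i, P (C i u) = C (q + i) u := fun i => by
    simp only [P]
    rw [if_pos ⟨i, rfl⟩, hadd]
  have hP' : ∀ x, (¬ ∃ i, x = C i u) → P x = x := fun x h => if_neg h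
  have hPP : Function.Involutive P := fun x => by
    by_cases h : ∃ i, x = C i u
    · obtain ⟨i, rfl⟩ := h
      rw [hP, hP, heq]
      exact ⟨1, by ring⟩
    · rw [hP' x h, hP' x h]
  have hwu : ∀ i, w (C i u) = C (-i) u := fun i => by rw [hwC, hu]
  have hwu' : ∀ i, w' (C i u) = C (-i - 1) u := fun i => by
    rw [hw', hadd, hwu]; congr 1; ring
  have hww' : ∀ x, w' (w' x) = x := fun x => by
    rw [hw', hw', hwC, hwC, hwC, hw, hadd]
    simpa using h0 x
  have horb : ∀ x, (∃ i, w x = C i u) → ∃ i, x = C i u := fun x ⟨i, hi⟩ =>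
    ⟨-i, by rw [← hwu, ← hi, hw]⟩
  have horb' : ∀ x, (∃ i, w' x = C i u) → ∃ i, x = C i u := fun x ⟨i, hi⟩ =>
    ⟨-i - 1, by rw [← hwu', ← hi, hww']⟩
  have hπ : ∀ x, hPP.toPerm P x = P x := fun _ => rfl
  have hc : ∀ x, P (w x) = w (P x) := fun x => by
    by_cases h : ∃ i, x = C i u
    · obtain ⟨i, rfl⟩ := h
      rw [hP, hwu, hwu, hP, heq]
      exact ⟨1, by ring⟩
    · rw [hP' x h, hP' _ fun h' => h (horb x h')]
  have hc' : ∀ x, P (w' x) = w' (P x) := fun x => by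
    by_cases h : ∃ i, x = C i u
    · obtain ⟨i, rfl⟩ := h
      rw [hP, hwu', hwu', hP, heq]
      exact ⟨1, by ring⟩
    · rw [hP' x h, hP' _ fun h' => h (horb' x h')]
  have hne : ∀ i, P (C i u) ≠ C i u := fun i h => by
    rw [hP, heq] at h
    have := Int.le_of_dvd (by omega) h
    omega
  refine ⟨hPP.toPerm P, hPP, hc, hc', fun x h1 h2 => ?_, ?_⟩
  · rw [hπ]
    refine hP' x ?_
    rintro ⟨i, rfl⟩
    rw [hwu, heq] at h1
    rw [hwu', heq] at h2
    have := dvd_sub h1 h2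
    have := Int.le_of_dvd (by omega) this
    omega
  · rcases Int.even_or_odd' q with ⟨t, rfl | rfl⟩
    · rw [odd_pairInversions (π := hPP.toPerm P) (v := C (-t) u) hPP hw hc (hne _),
        even_pairInversions (π := hPP.toPerm P) hPP hww' hc', add_zero]
      · intro a ha
        rw [hπ] at ha ⊢
        by_cases h : ∃ i, a = C i u
        · obtain ⟨i, rfl⟩ := h
          rw [hwu', hP, heq] at ha
          obtain ⟨k, hk⟩ := ha
          exfalso
          have : 2 * (2 * (t * k) + i + t) = -1 := by linear_combination -hk
          omega
        · exact hP' a h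
      · rw [hπ, hwu, hP]; congr 1; ring
      · intro a ha h
        rw [hπ] at ha h ⊢
        by_cases h : ∃ i, a = C i u
        · obtain ⟨i, rfl⟩ := h
          rw [hwu, hP, heq] at ha
          rw [hP, heq, heq]
          obtain ⟨k, hk⟩ := ha
          have hk' : i + t = - (2 * t * k) := by
            have : 2 * (i + t) = 2 * (- (2 * t * k)) := by linear_combination -hk
            omega
          rcases Int.even_or_odd' k with ⟨l, rfl | rfl⟩
          · exact Or.inl ⟨-l, by linear_combination hk'⟩
          · exact Or.inr ⟨-l - 1, by linear_combination hk'⟩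
        · exact absurd (hP' a h) ‹_›
    · rw [odd_pairInversions (π := hPP.toPerm P) (v := C (-t - 1) u) hPP hww' hc' (hne _),
        even_pairInversions (π := hPP.toPerm P) hPP hw hc, zero_add]
      · intro a ha
        rw [hπ] at ha ⊢
        by_cases h : ∃ i, a = C i u
        · obtain ⟨i, rfl⟩ := h
          rw [hwu, hP, heq] at ha
          obtain ⟨k, hk⟩ := ha
          exfalso
          have : 2 * ((2 * t + 1) * k + i + t) = -1 := by linear_combination -hk
          omega
        · exact hP' a h
      · rw [hπ, hwu', hP]; congr 1; ring
      · intro a ha h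
        rw [hπ] at ha h ⊢
        by_cases h : ∃ i, a = C i u
        · obtain ⟨i, rfl⟩ := h
          rw [hwu', hP, heq] at ha
          rw [hP, heq, heq]
          obtain ⟨k, hk⟩ := ha
          have hk' : i + t + 1 = - ((2 * t + 1) * k) := by
            have : 2 * (i + t + 1) = 2 * (- ((2 * t + 1) * k)) := by linear_combination -hk
            omega
          rcases Int.even_or_odd' k with ⟨l, rfl | rfl⟩
          · exact Or.inl ⟨-l, by linear_combination hk'⟩
          · exact Or.inr ⟨-l - 1, by linear_combination hk'⟩
        · exact absurd (hP' a h) ‹_›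

section

variable {α : Type*} {w w' : α → α} {C : ℤ → α → α}

lemma fixed_of_dvd (h0 : ∀ x, C 0 x = x) (hadd : ∀ i j x, C i (C j x) = C (i + j) x) {p : ℤ} {x : α}
    (hp : C p x = x) {i : ℤ} (hi : p ∣ i) : C i x = x := by
  obtain ⟨k, rfl⟩ := hi
  induction k using Int.induction_on with
  | zero => simpa using h0 x
  | succ k ih => rw [mul_add, mul_one, ← hadd, hp, ih]
  | pred k ih =>
    rw [mul_sub, mul_one]
    nth_rw 1 [← hp]
    rw [hadd, sub_add_cancel, ih]

/-- In an orbit of a dihedral action in which fixed points of the generating reflections have odd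
period, some point `v` can only be reflected to `C i v` when `C (2 * i - 1) v = v`. -/
lemma exists_base_point (h0 : ∀ x, C 0 x = x) (hadd : ∀ i j x, C i (C j x) = C (i + j) x)
    (hwC : ∀ i x, w (C i x) = C (-i) (w x)) (hw' : ∀ x, w' x = w (C 1 x))
    (hodd : ∀ u, w u = u ∨ w' u = u → ∃ m : ℤ, C (2 * m + 1) u = u) (r : α) :
    ∃ k, ∀ i, w (C k r) = C i (C k r) → C (2 * i - 1) (C k r) = C k r := by
  by_cases hr : ∃ j, w r = C j r
  swap
  · refine ⟨0, fun i hi => absurd ⟨i, ?_⟩ hr⟩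
    rwa [h0] at hi
  obtain ⟨j, hj⟩ := hr
  have key : ∀ (s e p i : ℤ) (u : α), C p u = u → w u = C e u → p ∣ 2 * (e - 2 * s) - 1 →
      w (C s u) = C i (C s u) → C (2 * i - 1) (C s u) = C s u := by
    intro s e p i u hp hwk hdvd hi
    have hps : C p (C s u) = C s u := by rw [hadd, add_comm, ← hadd, hp]
    have h1 : C (i - (e - 2 * s)) (C s u) = C s u := by
      have : w (C s u) = C (e - 2 * s) (C s u) := by
        rw [hwC, hwk, hadd, hadd]; congr 1; ring
      rw [sub_eq_neg_add, ← hadd, ← hi, this, hadd]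
      simpa using h0 _
    have h2 : C (2 * (i - (e - 2 * s))) (C s u) = C s u :=
      fixed_of_dvd h0 hadd h1 (Dvd.intro_left _ rfl)
    have h3 : C (2 * (e - 2 * s) - 1) (C s u) = C s u := fixed_of_dvd h0 hadd hps hdvd
    rw [show 2 * i - 1 = 2 * (i - (e - 2 * s)) + (2 * (e - 2 * s) - 1) by ring, ← hadd, h3, h2]
  rcases Int.even_or_odd' j with ⟨k, rfl | rfl⟩
  · have hk : w (C k r) = C k r := by rw [hwC, hj, hadd]; congr 1; ring
    obtain ⟨m, hm⟩ := hodd _ (Or.inl hk)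
    refine ⟨-(m + 1) ^ 2 + k, fun i => ?_⟩
    rw [← hadd]
    exact key _ 0 _ i _ hm (by rw [h0, hk]) ⟨2 * m + 3, by ring⟩
  · have hk : w (C k r) = C 1 (C k r) := by rw [hwC, hj, hadd, hadd]; congr 1; ring
    have hk' : w' (C k r) = C k r := by
      rw [hw', hwC, hk, hadd]
      simpa using h0 _
    obtain ⟨m, hm⟩ := hodd _ (Or.inr hk')
    refine ⟨(m + 1) ^ 2 + k, fun i => ?_⟩
    rw [← hadd]
    exact key _ 1 _ i _ hm hk ⟨-(2 * m + 3), by ring⟩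

lemma exists_swapping_involution (h0 : ∀ x, C 0 x = x) (hadd : ∀ i j x, C i (C j x) = C (i + j) x)
    (hw : ∀ x, w (w x) = x) (hwC : ∀ i x, w (C i x) = C (-i) (w x)) (hw' : ∀ x, w' x = w (C 1 x))
    (hodd : ∀ u, w u = u ∨ w' u = u → ∃ m : ℤ, C (2 * m + 1) u = u) :
    ∃ σ : α → α, (∀ x, σ (σ x) = x) ∧ (∀ x, σ (w x) = w' (σ x)) ∧
      ∀ x, w x = x → w' x = x → σ x = x := by
  classical
  let rel : Setoid α :=
    { r := fun x y => ∃ i, y = C i x ∨ y = C i (w x)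
      iseqv :=
        { refl := fun x => ⟨0, Or.inl (h0 x).symm⟩
          symm := by
            rintro x y ⟨i, rfl | rfl⟩
            · exact ⟨-i, Or.inl (by simp [hadd, h0])⟩
            · exact ⟨i, Or.inr (by simp [hadd, hwC, hw, h0])⟩
          trans := by
            rintro x y z ⟨i, rfl | rfl⟩ ⟨j, rfl | rfl⟩
            · exact ⟨j + i, Or.inl (by rw [hadd])⟩
            · exact ⟨j - i, Or.inr (by rw [hwC, hadd, sub_eq_add_neg])⟩
            · exact ⟨j + i, Or.inr (by rw [hadd])⟩
            · exact ⟨j - i, Or.inl (by rw [hwC, hadd, hw, sub_eq_add_neg])⟩ } }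
  choose k hk using exists_base_point h0 hadd hwC hw' hodd
  obtain ⟨b, hb, hgood, hrel⟩ : ∃ b : α → α, (∀ x y, rel x y → b x = b y) ∧
      (∀ x i, w (b x) = C i (b x) → C (2 * i - 1) (b x) = b x) ∧ ∀ x, rel (b x) x := by
    refine ⟨fun x => C (k (Quotient.mk rel x).out) (Quotient.mk rel x).out, fun x y h => ?_,
      fun x i => hk _ i, fun x => ?_⟩
    · have : Quotient.mk rel x = Quotient.mk rel y := Quotient.sound h
      simp only [this]
    · exact rel.trans (rel.symm ⟨_, Or.inl rfl⟩) (Quotient.mk_out (s := rel) x)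
  let σ : α → α := fun x => if h : ∃ i, x = C i (b x) then C (-h.choose) (b x) else
    if h : ∃ i, x = C i (w (b x)) then w' (C h.choose (b x)) else x
  have hw'' : ∀ x, w' x = C (-1) (w x) := fun x => by rw [hw', hwC]
  have hww' : ∀ x, w' (w' x) = x := fun x => by
    rw [hw'', hw'', hwC, hadd, hw]
    simpa using h0 x
  have hshift : ∀ i j x, C i x = C j x → C (-i) x = C (-j) x := fun i j x h => by
    rw [show -i = -i - j + j by ring, ← hadd, ← h, hadd]; congr 1; ring
  have hmix : ∀ i j x, C i (b x) = C j (w (b x)) → C (-i) (b x) = w' (C j (b x)) := by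
    intro i j x h
    have h1 : w (b x) = C (i - j) (b x) := by
      rw [sub_eq_neg_add, ← hadd, h, hadd]
      simpa using (h0 _).symm
    have h2 := hgood x _ h1
    rw [hw'', hwC, h1, hadd, hadd, show -1 + -j + (i - j) = -i + (2 * (i - j) - 1) by ring, ← hadd,
      h2]
  have hσ1 : ∀ x i, x = C i (b x) → σ x = C (-i) (b x) := fun x i hi => by
    have h : ∃ i, x = C i (b x) := ⟨i, hi⟩
    simp only [σ]
    rw [dif_pos h]
    exact hshift _ _ _ (h.choose_spec.symm.trans hi)
  have hσ2 : ∀ x i, x = C i (w (b x)) → σ x = w' (C i (b x)) := fun x i hi => by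
    by_cases h : ∃ i, x = C i (b x)
    · obtain ⟨j, hj⟩ := h
      rw [hσ1 x j hj]
      exact hmix _ _ _ (hj.symm.trans hi)
    · have h' : ∃ i, x = C i (w (b x)) := ⟨i, hi⟩
      simp only [σ]
      rw [dif_neg h, dif_pos h', hw'', hw'', hwC, hwC]
      exact congrArg (C (-1)) (hshift _ _ _ (h'.choose_spec.symm.trans hi))
  refine ⟨σ, fun x => ?_, fun x => ?_, fun x h1 h2 => ?_⟩
  · obtain ⟨i, hi | hi⟩ := hrel x
    · have hbx : b (σ x) = b x := by
        rw [hσ1 x i hi]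
        exact (hb _ _ (rel.trans (rel.symm (hrel x)) ⟨-i, Or.inl rfl⟩)).symm
      rw [hσ1 (σ x) (-i) (by rw [hbx, hσ1 x i hi]), hbx, neg_neg, ← hi]
    · have hx : σ x = C (-1 - i) (w (b x)) := by
        rw [hσ2 x i hi, hw'', hwC, hadd, sub_eq_add_neg]
      have hbx : b (σ x) = b x := by
        rw [hx]
        exact (hb _ _ (rel.trans (rel.symm (hrel x)) ⟨_, Or.inr rfl⟩)).symm
      rw [hσ2 (σ x) (-1 - i) (by rw [hbx, hx]), hbx, hw'', hwC, hadd]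
      conv_rhs => rw [hi]
      congr 1
      ring
  · have hbx : b (w x) = b x := (hb _ _ ⟨0, Or.inr (h0 _).symm⟩).symm
    obtain ⟨i, hi | hi⟩ := hrel x
    · rw [hσ1 x i hi, hσ2 (w x) (-i) (by rw [hbx, ← hwC, ← hi]), hbx]
    · rw [hσ2 x i hi, hσ1 (w x) (-i) (by conv_lhs => rw [hi, hwC, hw, ← hbx]), hbx, neg_neg,
        hww']
  · have h3 : C (-1) x = x := by rw [hw'', h1] at h2; exact h2
    have hfix : ∀ i, C i x = x := fun i => fixed_of_dvd h0 hadd h3 ⟨-i, by ring⟩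
    obtain ⟨i, hi | hi⟩ := rel.symm (hrel x)
    · have : x = b x := by rw [hi, hfix]
      rw [hσ1 x 0 (by rw [h0]; exact this), neg_zero, h0, ← this]
    · have : x = b x := by rw [hi, h1, hfix]
      rw [hσ1 x 0 (by rw [h0]; exact this), neg_zero, h0, ← this]

end

/-- Two involutions are either exchanged by conjugation with an involution or commute with a common
involution reversing an odd total number of their pairs. -/
lemma exists_swapping_or_odd_commuting {α : Type*} [Fintype α] [LinearOrder α] (w w' : Perm α)
    (hw : ∀ x, w (w x) = x) (hw' : ∀ x, w' (w' x) = x) :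
    (∃ σ : Perm α, (∀ x, σ (σ x) = x) ∧ (∀ x, σ (w x) = w' (σ x)) ∧
      ∀ x, w x = x → w' x = x → σ x = x) ∨
    ∃ π : Perm α, (∀ x, π (π x) = x) ∧ (∀ x, π (w x) = w (π x)) ∧ (∀ x, π (w' x) = w' (π x)) ∧
      (∀ x, w x = x → w' x = x → π x = x) ∧
      (pairInversions w π + pairInversions w' π : ZMod 2) = 1 := by
  let C : Perm α → Perm α → ℤ → α → α := fun w w' i x => ((w * w') ^ i) x
  have h0 : ∀ w w' x, C w w' 0 x = x := fun w w' x => by simp [C]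
  have hadd : ∀ w w' i j x, C w w' i (C w w' j x) = C w w' (i + j) x := fun w w' i j x => by
    simp [C, zpow_add]
  have hwC : ∀ w w' : Perm α, (∀ x, w (w x) = x) → (∀ x, w' (w' x) = x) → ∀ i x,
      w (C w w' i x) = C w w' (-i) (w x) := fun w w' hw hw' i x => by
    have h1 : w * w = 1 := Equiv.ext hw
    have h2 : w' * w' = 1 := Equiv.ext hw'
    have h3 : SemiconjBy w (w * w') (w * w')⁻¹ := by
      rw [SemiconjBy, mul_inv_rev, inv_mul_cancel_right, ← mul_assoc, h1, one_mul]
      exact (inv_eq_of_mul_eq_one_left h2).symm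
    have h4 := (h3.zpow_right i).eq
    rw [inv_zpow', ← Equiv.coe_fn_injective.eq_iff] at h4
    exact congrFun h4 x
  have hw1 : ∀ w w' : Perm α, (∀ x, w (w x) = x) → ∀ x, w' x = w (C w w' 1 x) :=
    fun w w' hw x => by simp [C, hw]
  have hinv : ∀ (i : ℤ) x, C w' w i x = C w w' (-i) x := fun i x => by
    have h1 : w * w = 1 := Equiv.ext hw
    have h2 : w' * w' = 1 := Equiv.ext hw'
    have h3 : w' * w = (w * w')⁻¹ := by
      rw [mul_inv_rev, inv_eq_of_mul_eq_one_left h1, inv_eq_of_mul_eq_one_left h2]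
    simp only [C]
    rw [h3, inv_zpow']
  by_cases hodd : ∀ u, w u = u ∨ w' u = u → ∃ m : ℤ, C w w' (2 * m + 1) u = u
  · left
    obtain ⟨σ, h1, h2, h3⟩ := exists_swapping_involution (h0 w w') (hadd w w') hw
      (hwC w w' hw hw') (hw1 w w' hw) hodd
    exact ⟨Function.Involutive.toPerm σ h1, h1, h2, h3⟩
  · right
    push Not at hodd
    obtain ⟨u, hu, hnot⟩ := hodd
    have hdvd : ∀ i : ℤ, C w w' i u = u ↔ (MulAction.period (w * w') u : ℤ) ∣ i := fun i =>
      MulAction.zpow_smul_eq_iff_period_dvd (g := w * w') (a := u)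
    have hpos : 0 < MulAction.period (w * w') u :=
      MulAction.period_pos_of_orderOf_pos (orderOf_pos _) u
    obtain ⟨q, hq⟩ : ∃ q : ℤ, (MulAction.period (w * w') u : ℤ) = 2 * q := by
      rcases Int.even_or_odd' (MulAction.period (w * w') u : ℤ) with ⟨q, h | h⟩
      · exact ⟨q, h⟩
      · exact absurd ((hdvd (2 * q + 1)).2 (by rw [h])) (hnot q)
    rw [hq] at hdvd
    rcases hu with hu | hu
    · exact exists_commuting_involution (h0 w w') (hadd w w') hw (hwC w w' hw hw') (hw1 w w' hw) hu
        (by omega) hdvd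
    · obtain ⟨π, h1, h2, h3, h4, h5⟩ := exists_commuting_involution (h0 w' w) (hadd w' w) hw'
        (hwC w' w hw' hw) (hw1 w' w hw') hu (q := q) (by omega)
        (fun i => by rw [hinv, hdvd, dvd_neg])
      exact ⟨π, h1, h3, h2, fun x hx hx' => h4 x hx' hx, by rw [add_comm]; exact h5⟩

/-- The partial identity of `ISₙ` with domain `T`. -/
def ISn.restrict {n : ℕ} (T : Finset (Fin n)) : ISn n := PEquiv.ofSet {a | a ∈ T}

namespace ISn

variable {n : ℕ}

lemma restrict_apply (T : Finset (Fin n)) (a : Fin n) :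
    restrict T a = if a ∈ T then some a else none := rfl

lemma mul_apply (x y : ISn n) (a : Fin n) : (x * y) a = (y a).bind x := rfl

lemma restrict_mul_restrict (S T : Finset (Fin n)) : restrict S * restrict T = restrict (S ∩ T) := by
  refine PEquiv.ext fun a => ?_
  rw [mul_apply, restrict_apply, restrict_apply]
  by_cases h : a ∈ T <;> simp [h, restrict_apply]

lemma symm_restrict (T : Finset (Fin n)) : (restrict T).symm = restrict T := by
  simp [restrict]

lemma symm_mul (x y : ISn n) : PEquiv.symm (x * y) = PEquiv.symm y * PEquiv.symm x := rfl

lemma mul_restrict_eq_self {x : ISn n} {T : Finset (Fin n)} (h : ∀ a ∉ T, x a = none) :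
    x * restrict T = x := by
  refine PEquiv.ext fun a => ?_
  rw [mul_apply, restrict_apply]
  by_cases ha : a ∈ T
  · simp [ha]
  · simp [ha, h]

lemma restrict_compl_mul {x : ISn n} {a b : Fin n} (h : x a = some b) :
    restrict {b}ᶜ * x = x * restrict {a}ᶜ := by
  refine PEquiv.ext fun c => ?_
  rw [mul_apply, mul_apply, restrict_apply]
  by_cases hc : c = a
  · subst hc
    simp [h, restrict_apply]
  · have : x c ≠ some b := fun h' => hc (x.inj h' h)
    cases hxc : x c with
    | none => simp [hc, hxc]
    | some d =>
      have hd : d ≠ b := fun h' => this (by rw [hxc, h'])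
      simp [hc, hd, restrict_apply, hxc]

/-- Permutations as elements of `ISₙ`. -/
def ofPerm : Perm (Fin n) →* ISn n where
  toFun g := g.toPEquiv
  map_one' := by simp [ISn.one_def, Perm.one_def]
  map_mul' g h := by simp [ISn.mul_def, Equiv.toPEquiv_trans, Perm.mul_def]

lemma ofPerm_apply (g : Perm (Fin n)) (a : Fin n) : ofPerm g a = some (g a) := rfl

lemma symm_ofPerm (g : Perm (Fin n)) : (ofPerm g).symm = ofPerm g⁻¹ := rfl

end ISn

/-- The idempotents of a family of commuting idempotents `P` attached to subsets of the index set. -/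
def atomIdempotent {ι B : Type*} [Fintype ι] [DecidableEq ι] [CommRing B] (P : ι → B)
    (X : Finset ι) : B :=
  (∏ a ∈ X, (1 - P a)) * ∏ a ∈ Finset.univ \ X, P a

section Atom

variable {ι B : Type*} [Fintype ι] [DecidableEq ι] [CommRing B] (P : ι → B)

lemma sum_atomIdempotent : ∑ X, atomIdempotent P X = 1 := by
  have := Finset.prod_add (fun a => 1 - P a) P Finset.univ
  simpa [atomIdempotent] using this.symm

lemma mul_atomIdempotent (hP : ∀ a, P a * P a = P a) (X : Finset ι) (a : ι) :
    P a * atomIdempotent P X = if a ∈ X then 0 else atomIdempotent P X := by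
  split_ifs with h
  · rw [atomIdempotent, ← Finset.mul_prod_erase _ _ h, ← mul_assoc, ← mul_assoc, mul_sub, mul_one,
      hP, sub_self, zero_mul, zero_mul]
  · have h' : a ∈ Finset.univ \ X := by simpa using h
    rw [atomIdempotent, ← Finset.mul_prod_erase _ _ h', mul_left_comm, ← mul_assoc (P a), hP]

end Atom

/-- The linear extension of inversion of partial maps to the semigroup algebra of `ISₙ`. -/
noncomputable abbrev symmIS (n : ℕ) : MonoidAlgebra ℂ (ISn n) →ₗ[ℂ] MonoidAlgebra ℂ (ISn n) :=
  extendLinear ℂ PEquiv.symm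

lemma symmIS_mul {n : ℕ} (a b : MonoidAlgebra ℂ (ISn n)) :
    symmIS n (a * b) = symmIS n b * symmIS n a :=
  extendLinear_mul ISn.symm_mul a b

lemma symmIS_symmIS {n : ℕ} (a : MonoidAlgebra ℂ (ISn n)) : symmIS n (symmIS n a) = a :=
  extendLinear_extendLinear (fun x => x.symm_symm) a

/-- The basis element of the semigroup algebra given by the identity outside the point `a`. -/
noncomputable def deletePoint {n : ℕ} (a : Fin n) : MonoidAlgebra ℂ (ISn n) :=
  MonoidAlgebra.of ℂ _ (ISn.restrict {a}ᶜ)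

/-- A family of elements of the semigroup algebra adding up to `1`, in which the member attached to
`X` is killed by removing a point of `X` and fixed by removing a point outside `X`. -/
structure IsAtomFamily {n : ℕ} (ε : Finset (Fin n) → MonoidAlgebra ℂ (ISn n)) : Prop where
  sum_eq_one : ∑ X, ε X = 1
  deletePoint_mul : ∀ X a, deletePoint a * ε X = if a ∈ X then 0 else ε X
  mul_deletePoint : ∀ X a, ε X * deletePoint a = if a ∈ X then 0 else ε X

lemma exists_isAtomFamily (n : ℕ) :
    ∃ ε : Finset (Fin n) → MonoidAlgebra ℂ (ISn n), IsAtomFamily ε := by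
  classical
  let ρ : (Fin n → ℕ) →* ISn n :=
    { toFun := fun f => ISn.restrict {a | f a ≠ 0}
      map_one' := by
        refine PEquiv.ext fun a => ?_
        simp [ISn.restrict_apply]
      map_mul' := fun f g => by
        rw [ISn.restrict_mul_restrict]
        congr 1
        ext a
        simp }
  let Φ : MonoidAlgebra ℂ (Fin n → ℕ) →+* MonoidAlgebra ℂ (ISn n) :=
    MonoidAlgebra.mapDomainRingHom ℂ ρ
  let P : Fin n → MonoidAlgebra ℂ (Fin n → ℕ) := fun a =>
    MonoidAlgebra.single (fun b => if b = a then 0 else 1) 1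
  have hP : ∀ a, P a * P a = P a := fun a => by
    simp only [P, MonoidAlgebra.single_mul_single, mul_one]
    congr 1
    ext b
    by_cases h : b = a <;> simp [h]
  have hΦ : ∀ a, Φ (P a) = deletePoint a := fun a => by
    have : ρ (fun b => if b = a then 0 else 1) = ISn.restrict {a}ᶜ := by
      change ISn.restrict _ = ISn.restrict _
      congr 1
      ext b
      simp
    simp [Φ, P, deletePoint, this]
  have h : ∀ X a, Φ (P a * atomIdempotent P X) =
      if a ∈ X then 0 else Φ (atomIdempotent P X) := fun X a => by
    rw [mul_atomIdempotent P hP]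
    split_ifs <;> simp
  refine ⟨fun X => Φ (atomIdempotent P X), ?_, fun X a => ?_, fun X a => ?_⟩
  · rw [← map_sum, sum_atomIdempotent, map_one]
  · rw [← h, map_mul, hΦ]
  · rw [← h, mul_comm, map_mul, hΦ]

lemma symmIS_deletePoint {n : ℕ} (a : Fin n) : symmIS n (deletePoint a) = deletePoint a := by
  simp [deletePoint, symmIS, ISn.symm_restrict]

lemma ofSubtype_apply_mem_iff {α : Type*} [DecidableEq α] {X : Finset α} (g : Perm X) (a : α) :
    Perm.ofSubtype g a ∈ X ↔ a ∈ X := by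
  by_cases ha : a ∈ X
  · rw [Perm.ofSubtype_apply_of_mem g ha]
    simp [ha]
  · rw [Perm.ofSubtype_apply_of_not_mem g ha]

namespace IsAtomFamily

variable {n : ℕ} {ε : Finset (Fin n) → MonoidAlgebra ℂ (ISn n)} (h : IsAtomFamily ε)

include h

lemma mul_eq_self {X : Finset (Fin n)} {y : MonoidAlgebra ℂ (ISn n)}
    (hy : ∀ a, deletePoint a * y = if a ∈ X then 0 else y) : ε X * y = y := by
  have hY : ∀ Y, Y ≠ X → ε Y * y = 0 := fun Y hYX => by
    have : ∃ a, ¬ (a ∈ Y ↔ a ∈ X) := by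
      by_contra! hc
      exact hYX (Finset.ext hc)
    obtain ⟨a, ha⟩ := this
    have h1 := congrArg (ε Y * ·) (hy a)
    simp only [← mul_assoc, h.mul_deletePoint] at h1
    by_cases haX : a ∈ X
    · have haY : a ∉ Y := by tauto
      simpa [haX, haY] using h1
    · have haY : a ∈ Y := by tauto
      simpa [haX, haY] using h1.symm
  calc ε X * y = ∑ Y, ε Y * y :=
        (Finset.sum_eq_single X (fun Y _ hYX => hY Y hYX) (by simp)).symm
    _ = y := by rw [← Finset.sum_mul, h.sum_eq_one, one_mul]

lemma mul_self (X : Finset (Fin n)) : ε X * ε X = ε X :=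
  h.mul_eq_self (h.deletePoint_mul X)

lemma symm_eq (X : Finset (Fin n)) : symmIS n (ε X) = ε X := by
  have h1 : ε X * symmIS n (ε X) = symmIS n (ε X) := h.mul_eq_self fun a => by
    rw [← symmIS_deletePoint, ← symmIS_mul, h.mul_deletePoint]
    split_ifs <;> simp
  have h2 := congrArg (symmIS n) h1
  rw [symmIS_mul, symmIS_symmIS, h1] at h2
  exact h2

lemma of_restrict_compl_mul {X S : Finset (Fin n)} (hS : Disjoint X S) :
    MonoidAlgebra.of ℂ _ (ISn.restrict Sᶜ) * ε X = ε X := by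
  induction S using Finset.induction_on with
  | empty =>
    have : ISn.restrict (∅ : Finset (Fin n))ᶜ = 1 := by
      refine PEquiv.ext fun a => ?_
      simp [ISn.restrict_apply]
    rw [this, map_one, one_mul]
  | insert a S ha ih =>
    rw [Finset.disjoint_insert_right] at hS
    have : (insert a S)ᶜ = ({a} : Finset (Fin n))ᶜ ∩ Sᶜ := by
      ext; simp
    rw [this, ← ISn.restrict_mul_restrict, map_mul, mul_assoc, ih hS.2]
    exact (h.deletePoint_mul X a).trans (by simp [hS.1])

lemma of_mul_eq_of_mul {X : Finset (Fin n)} {x y : ISn n} (hxy : ∀ a ∈ X, x a = y a) :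
    MonoidAlgebra.of ℂ _ x * ε X = MonoidAlgebra.of ℂ _ y * ε X := by
  have h1 : x * ISn.restrict X = y * ISn.restrict X := by
    refine PEquiv.ext fun a => ?_
    rw [ISn.mul_apply, ISn.mul_apply, ISn.restrict_apply]
    by_cases ha : a ∈ X <;> simp [ha, hxy]
  have h2 := h.of_restrict_compl_mul (X := X) (S := Xᶜ) disjoint_compl_right
  rw [compl_compl] at h2
  rw [← h2, ← mul_assoc, ← mul_assoc, ← map_mul, ← map_mul, h1]

lemma of_ofPerm_mul_comm {X : Finset (Fin n)} (g : Perm (Fin n)) (hg : ∀ a, g a ∈ X ↔ a ∈ X) :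
    MonoidAlgebra.of ℂ _ (ISn.ofPerm g) * ε X = ε X * MonoidAlgebra.of ℂ _ (ISn.ofPerm g) := by
  have key : ∀ g : Perm (Fin n), (∀ a, g a ∈ X ↔ a ∈ X) →
      ε X * (MonoidAlgebra.of ℂ _ (ISn.ofPerm g) * ε X) =
        MonoidAlgebra.of ℂ _ (ISn.ofPerm g) * ε X := fun g hg => h.mul_eq_self fun b => by
    have hb : ISn.ofPerm g (g⁻¹ b) = some b := by simp [ISn.ofPerm_apply]
    have hgb := hg (g⁻¹ b)
    rw [show g (g⁻¹ b) = b from g.apply_symm_apply b] at hgb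
    rw [deletePoint, ← mul_assoc, ← map_mul, ISn.restrict_compl_mul hb, map_mul, mul_assoc]
    refine (congrArg _ (h.deletePoint_mul X (g⁻¹ b))).trans ?_
    by_cases hbX : b ∈ X
    · rw [if_pos hbX, if_pos (hgb.1 hbX), mul_zero]
    · rw [if_neg hbX, if_neg (fun hc => hbX (hgb.2 hc))]
  have hinv : ∀ a, g⁻¹ a ∈ X ↔ a ∈ X := fun a => by
    rw [← hg (g⁻¹ a), show g (g⁻¹ a) = a from g.apply_symm_apply a]
  have h1 := congrArg (symmIS n) (key g⁻¹ hinv)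
  have h2 : symmIS n (MonoidAlgebra.of ℂ _ (ISn.ofPerm g⁻¹)) =
      MonoidAlgebra.of ℂ _ (ISn.ofPerm g) := by
    simp [symmIS, ISn.symm_ofPerm]
  rw [symmIS_mul, symmIS_mul, h.symm_eq, h2, mul_assoc, key g hg] at h1
  exact h1

lemma mul_of_mul (X : Finset (Fin n)) (x : ISn n) :
    ε X * MonoidAlgebra.of ℂ _ x * ε X = 0 ∨ ∃ g : Perm X,
      ε X * MonoidAlgebra.of ℂ _ x * ε X =
        MonoidAlgebra.of ℂ _ (ISn.ofPerm (Perm.ofSubtype g)) * ε X := by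
  classical
  by_cases hx : ∀ a ∈ X, ∃ b ∈ X, x a = some b
  · right
    choose! f hf using hx
    have hinj : Function.Injective fun a : X => (⟨f a, (hf a a.2).1⟩ : X) := fun a b hab => by
      have hab' : f a = f b := congrArg Subtype.val hab
      refine Subtype.ext (x.inj (hf a a.2).2 ?_)
      rw [hab']
      exact (hf b b.2).2
    let g : Perm X := Equiv.ofBijective _ (Finite.injective_iff_bijective.1 hinj)
    refine ⟨g, ?_⟩
    rw [mul_assoc, h.of_mul_eq_of_mul (y := ISn.ofPerm (Perm.ofSubtype g)), ← mul_assoc,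
      ← h.of_ofPerm_mul_comm _ (ofSubtype_apply_mem_iff g), mul_assoc, h.mul_self]
    intro a ha
    rw [ISn.ofPerm_apply, Perm.ofSubtype_apply_of_mem g ha, (hf a ha).2]
    rfl
  · left
    push Not at hx
    obtain ⟨a, ha, hx⟩ := hx
    cases hxa : x a with
    | none =>
      have h1 : x * ISn.restrict {a}ᶜ = x := ISn.mul_restrict_eq_self fun b hb => by
        obtain rfl : b = a := by simpa using hb
        exact hxa
      have h2 := h.deletePoint_mul X a
      rw [if_pos ha, deletePoint] at h2
      rw [← h1, map_mul, mul_assoc, mul_assoc, h2, mul_zero, mul_zero]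
    | some b =>
      have hb : b ∉ X := fun hb => hx b hb hxa
      have h1 := h.mul_deletePoint X b
      have h2 := h.deletePoint_mul X a
      rw [if_neg hb, deletePoint] at h1
      rw [if_pos ha, deletePoint] at h2
      have h3 : MonoidAlgebra.of ℂ _ (ISn.restrict {b}ᶜ) * MonoidAlgebra.of ℂ _ x * ε X = 0 := by
        rw [← map_mul, ISn.restrict_compl_mul hxa, map_mul, mul_assoc, h2, mul_zero]
      have h4 := congrArg (ε X * ·) h3
      simpa only [← mul_assoc, h1, mul_zero] using h4

end IsAtomFamily

/-- The real group algebra of the permutations of `X` inside the semigroup algebra of `ISₙ`. -/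
noncomputable def ofPermAlgebra {n : ℕ} (X : Finset (Fin n)) :
    MonoidAlgebra ℝ (Perm X) →ₐ[ℝ] MonoidAlgebra ℂ (ISn n) :=
  MonoidAlgebra.lift ℝ _ _ ((MonoidAlgebra.of ℂ _).comp (ISn.ofPerm.comp Perm.ofSubtype))

lemma ofPermAlgebra_single {n : ℕ} (X : Finset (Fin n)) (g : Perm X) (r : ℝ) :
    ofPermAlgebra X (MonoidAlgebra.single g r) =
      r • MonoidAlgebra.of ℂ _ (ISn.ofPerm (Perm.ofSubtype g)) := by
  simp [ofPermAlgebra]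

lemma symmIS_ofPermAlgebra {n : ℕ} (X : Finset (Fin n)) (a : MonoidAlgebra ℝ (Perm X)) :
    symmIS n (ofPermAlgebra X a) = ofPermAlgebra X (extendLinear ℝ (·⁻¹) a) := by
  induction a using MonoidAlgebra.induction_linear with
  | zero => simp
  | add a b ha hb => simp only [map_add, ha, hb]
  | single g r =>
    rw [extendLinear_single, ofPermAlgebra_single, ofPermAlgebra_single, map_inv,
      ← Complex.coe_smul, ← Complex.coe_smul, map_smul]
    simp [symmIS, ISn.symm_ofPerm]

/-- Idempotents of the semigroup algebra of `ISₙ` that are fixed by inversion, have one-dimensional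
corners and, unless they vanish, live on a subset of `{1, …, n}` with real corner coefficients. -/
def primitiveIdempotentsIS (n : ℕ) : Set (MonoidAlgebra ℂ (ISn n)) :=
  {E | E * E = E ∧ symmIS n E = E ∧ (∀ a, ∃ c : ℂ, E * a * E = c • E) ∧
    (E ≠ 0 → ∃ X : Finset (Fin n), ∃ l : Perm X → ℝ, l 1 = 1 ∧
      (∀ g, E * MonoidAlgebra.of ℂ _ (ISn.ofPerm (Perm.ofSubtype g)) * E = (l g : ℂ) • E) ∧
      ∀ a, deletePoint a * E = if a ∈ X then 0 else E)}

lemma IsAtomFamily.ofPermAlgebra_mul_comm {n : ℕ} {ε : Finset (Fin n) → MonoidAlgebra ℂ (ISn n)}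
    (h : IsAtomFamily ε) (X : Finset (Fin n)) (a : MonoidAlgebra ℝ (Perm X)) :
    ofPermAlgebra X a * ε X = ε X * ofPermAlgebra X a := by
  induction a using MonoidAlgebra.induction_linear with
  | zero => simp
  | add a b ha hb => simp only [map_add, add_mul, mul_add, ha, hb]
  | single g r =>
    rw [ofPermAlgebra_single, smul_mul_assoc, mul_smul_comm, h.of_ofPerm_mul_comm]
    exact ofSubtype_apply_mem_iff g

lemma IsAtomFamily.ofPermAlgebra_mul_mem {n : ℕ} {ε : Finset (Fin n) → MonoidAlgebra ℂ (ISn n)}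
    (h : IsAtomFamily ε) {X : Finset (Fin n)} {e : MonoidAlgebra ℝ (Perm X)}
    (he : e ∈ primitiveIdempotents (Perm X)) :
    ofPermAlgebra X e * ε X ∈ primitiveIdempotentsIS n := by
  set Θ := ofPermAlgebra X
  have hcomm := h.ofPermAlgebra_mul_comm X
  have corner : ∀ a, Θ e * ε X * a * (Θ e * ε X) = Θ e * (ε X * a * ε X) * Θ e := fun a => by
    rw [hcomm e]
    simp only [mul_assoc]
    rw [← hcomm e, ← mul_assoc (ε X), ← hcomm e, mul_assoc]
  have cornerPerm : ∀ (g : Perm X) (r : ℝ), e * MonoidAlgebra.single g 1 * e = r • e →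
      Θ e * (MonoidAlgebra.of ℂ _ (ISn.ofPerm (Perm.ofSubtype g)) * ε X) * Θ e =
        (r : ℂ) • (Θ e * ε X) := fun g r hr => by
    have h1 : Θ (MonoidAlgebra.single g 1) = MonoidAlgebra.of ℂ _ (ISn.ofPerm (Perm.ofSubtype g)) := by
      rw [ofPermAlgebra_single, one_smul]
    rw [← h1, Complex.coe_smul, ← smul_mul_assoc, ← map_smul, ← hr, map_mul, map_mul, mul_assoc,
      mul_assoc, ← hcomm, mul_assoc, mul_assoc]
  refine ⟨?_, ?_, fun a => ?_, fun hE => ?_⟩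
  · rw [mul_assoc, ← mul_assoc (ε X), ← hcomm e, mul_assoc, h.mul_self, ← mul_assoc, ← map_mul,
      he.1]
  · rw [symmIS_mul, h.symm_eq, symmIS_ofPermAlgebra, he.2.1, hcomm]
  · induction a using MonoidAlgebra.induction_linear with
    | zero => exact ⟨0, by simp⟩
    | add a b ha hb =>
      obtain ⟨c, hc⟩ := ha
      obtain ⟨d, hd⟩ := hb
      exact ⟨c + d, by rw [mul_add, add_mul, hc, hd, add_smul]⟩
    | single x r =>
      have hx : MonoidAlgebra.single x r = r • MonoidAlgebra.of ℂ _ x := by simp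
      suffices ∃ c : ℂ, Θ e * ε X * MonoidAlgebra.of ℂ _ x * (Θ e * ε X) = c • (Θ e * ε X) by
        obtain ⟨c, hc⟩ := this
        exact ⟨r * c, by rw [hx, mul_smul_comm, smul_mul_assoc, hc, mul_smul]⟩
      rw [corner]
      obtain h0 | ⟨g, hg⟩ := h.mul_of_mul X x
      · exact ⟨0, by rw [h0]; simp⟩
      · obtain ⟨r, hr⟩ := he.2.2 (MonoidAlgebra.single g 1)
        exact ⟨r, by rw [hg, cornerPerm g r hr]⟩
  · have he0 : e ≠ 0 := by
      rintro rfl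
      simp at hE
    obtain ⟨l, hl, hl1, -⟩ := exists_corner_coefficient he he0
    refine ⟨X, l, hl1, fun g => ?_, fun a => ?_⟩
    · rw [corner, ← cornerPerm g _ (hl g)]
      congr 2
      rw [h.of_ofPerm_mul_comm, mul_assoc, h.of_ofPerm_mul_comm, ← mul_assoc, h.mul_self]
      all_goals exact fun a => ofSubtype_apply_mem_iff g a
    · rw [hcomm e, ← mul_assoc, h.deletePoint_mul]
      split_ifs <;> simp

theorem one_mem_closure_primitiveIdempotentsIS (n : ℕ) :
    1 ∈ AddSubmonoid.closure (primitiveIdempotentsIS n) := by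
  obtain ⟨ε, h⟩ := exists_isAtomFamily n
  rw [← h.sum_eq_one]
  refine sum_mem fun X _ => ?_
  let φ : MonoidAlgebra ℝ (Perm X) →+ MonoidAlgebra ℂ (ISn n) :=
    (AddMonoidHom.mulRight (ε X)).comp (ofPermAlgebra X : _ →+ _)
  have h1 : φ 1 = ε X := by simp [φ]
  rw [← h1]
  have h2 := AddSubmonoid.mem_map_of_mem φ (one_mem_closure_primitiveIdempotents_perm X)
  rw [AddMonoidHom.map_mclosure] at h2
  refine AddSubmonoid.closure_mono ?_ h2
  rintro _ ⟨e, he, rfl⟩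
  exact h.ofPermAlgebra_mul_mem he

/-- The formula for the signed conjugation action of `ISₙ` on `V`. -/
def IsSignedConjugation {n : ℕ} (ρ : MonoidAlgebra ℂ (ISn n) →ₐ[ℂ] Module.End ℂ (VIS n)) : Prop :=
  ∀ (x : ISn n) (w : ISInv n), ρ (MonoidAlgebra.of ℂ (ISn n) x) (Finsupp.single w 1) =
    if ∀ a : Fin n, (w.1 a).isSome → (x a).isSome then
      ((-1 : ℂ) ^ invIS w x) • Finsupp.single (conjIS x w) (1 : ℂ)
    else 0

lemma ISInv.apply_comm {n : ℕ} (w : ISInv n) {a b : Fin n} (h : w.1 a = some b) :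
    w.1 b = some a := by
  have := PEquiv.eq_some_iff w.1 (a := b) (b := a)
  rw [w.2] at this
  exact this.1 h

lemma conjIS_apply_eq_some {n : ℕ} {x : ISn n} {w : ISInv n} {c d : Fin n} :
    (conjIS x w).1 c = some d ↔ ∃ a b, x a = some c ∧ w.1 a = some b ∧ x b = some d := by
  simp only [conjIS, PEquiv.trans_eq_some]
  constructor
  · rintro ⟨b, ⟨a, ha, hb⟩, hd⟩
    exact ⟨a, b, (PEquiv.eq_some_iff x).1 ha, hb, hd⟩
  · rintro ⟨a, b, ha, hb, hd⟩
    exact ⟨b, ⟨a, (PEquiv.eq_some_iff x).2 ha, hb⟩, hd⟩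

lemma isSome_symm_of_conjIS {n : ℕ} (x : ISn n) (w : ISInv n) (c : Fin n)
    (h : ((conjIS x w).1 c).isSome) : (x.symm c).isSome := by
  obtain ⟨d, hd⟩ := Option.isSome_iff_exists.1 h
  obtain ⟨a, b, ha, -⟩ := conjIS_apply_eq_some.1 hd
  rw [(PEquiv.eq_some_iff x).2 ha]
  rfl

lemma conjIS_symm_conjIS {n : ℕ} {x : ISn n} {w : ISInv n}
    (h : ∀ a, (w.1 a).isSome → (x a).isSome) : conjIS x.symm (conjIS x w) = w := by
  refine Subtype.ext (PEquiv.ext fun a => Option.ext fun b => ?_)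
  rw [conjIS_apply_eq_some]
  constructor
  · rintro ⟨c, d, hc, hd, hb⟩
    obtain ⟨a', b', ha', hw, hb'⟩ := conjIS_apply_eq_some.1 hd
    rw [PEquiv.eq_some_iff] at hc hb
    obtain rfl := x.inj ha' hc
    obtain rfl := x.inj hb' hb
    exact hw
  · intro hab
    obtain ⟨c, hc⟩ := Option.isSome_iff_exists.1 (h a (by rw [hab]; rfl))
    obtain ⟨d, hd⟩ := Option.isSome_iff_exists.1 (h b (by rw [w.apply_comm hab]; rfl))
    exact ⟨c, d, (PEquiv.eq_some_iff x).2 hc, conjIS_apply_eq_some.2 ⟨a, b, hc, hab, hd⟩,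
      (PEquiv.eq_some_iff x).2 hd⟩

lemma invIS_le_invIS_symm {n : ℕ} (x : ISn n) (w : ISInv n) :
    invIS w x ≤ invIS (conjIS x w) x.symm := by
  refine Set.ncard_le_ncard_of_injOn
    (fun p => ((x p.2).getD p.2, (x p.1).getD p.1)) ?_ ?_ (Set.toFinite _)
  · rintro ⟨a, b⟩ ⟨hab, hw, c, d, hc, hd, hdc⟩
    dsimp only at hab hw hc hd ⊢
    rw [hc, hd]
    exact ⟨hdc, conjIS_apply_eq_some.2 ⟨b, a, hd, w.apply_comm hw, hc⟩, b, a,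
      (PEquiv.eq_some_iff x).2 hd, (PEquiv.eq_some_iff x).2 hc, hab⟩
  · rintro ⟨a, b⟩ ⟨-, -, c, d, hc, hd, -⟩ ⟨a', b'⟩ ⟨-, -, c', d', hc', hd', -⟩ heq
    dsimp only at heq hc hd hc' hd'
    rw [hc, hd, hc', hd'] at heq
    obtain ⟨rfl, rfl⟩ := Prod.mk.inj heq
    exact Prod.ext (x.inj hc hc') (x.inj hd hd')

lemma invIS_conjIS_symm {n : ℕ} {x : ISn n} {w : ISInv n}
    (h : ∀ a, (w.1 a).isSome → (x a).isSome) : invIS (conjIS x w) x.symm = invIS w x := by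
  refine le_antisymm ?_ (invIS_le_invIS_symm x w)
  have := invIS_le_invIS_symm x.symm (conjIS x w)
  rwa [conjIS_symm_conjIS h, PEquiv.symm_symm] at this

noncomputable instance (n : ℕ) : Fintype (ISn n) :=
  @Fintype.ofFinite _ (Finite.of_injective (fun (x : ISn n) a => x a) DFunLike.coe_injective)

/-- The symmetric bilinear form on `V` for which the involutions are orthonormal. -/
noncomputable def formIS (n : ℕ) : VIS n →ₗ[ℂ] VIS n →ₗ[ℂ] ℂ :=
  LinearMap.mk₂ ℂ (fun u v => ∑ w, u w * v w)
    (fun u u' v => by simp [add_mul, Finset.sum_add_distrib])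
    (fun c u v => by simp [Finset.mul_sum, mul_assoc])
    (fun u v v' => by simp [mul_add, Finset.sum_add_distrib])
    (fun c u v => by simp [Finset.mul_sum, mul_left_comm])

lemma formIS_single {n : ℕ} (u : VIS n) (w : ISInv n) : formIS n u (Finsupp.single w 1) = u w := by
  classical
  simp [formIS, Finsupp.single_apply]

lemma formIS_comm {n : ℕ} (u v : VIS n) : formIS n u v = formIS n v u := by
  simp [formIS, mul_comm]

lemma eq_zero_of_formIS {n : ℕ} {u : VIS n} (h : ∀ v, formIS n u v = 0) : u = 0 :=
  Finsupp.ext fun w => by rw [← formIS_single, h]; rfl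

namespace IsSignedConjugation

variable {n : ℕ} {ρ : MonoidAlgebra ℂ (ISn n) →ₐ[ℂ] Module.End ℂ (VIS n)}
  (h : IsSignedConjugation ρ)

include h

lemma formIS_of (x : ISn n) (u v : VIS n) :
    formIS n (ρ (MonoidAlgebra.of ℂ _ x) u) v = formIS n u (ρ (MonoidAlgebra.of ℂ _ x.symm) v) := by
  classical
  have single : ∀ w w', formIS n (ρ (MonoidAlgebra.of ℂ _ x) (Finsupp.single w 1))
      (Finsupp.single w' 1) = formIS n (Finsupp.single w 1)
        (ρ (MonoidAlgebra.of ℂ _ x.symm) (Finsupp.single w' 1)) := fun w w' => by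
    rw [formIS_single, formIS_comm, formIS_single, h, h]
    by_cases h1 : ∀ a, (w.1 a).isSome → (x a).isSome
    · rw [if_pos h1]
      by_cases h2 : conjIS x w = w'
      · subst h2
        rw [if_pos (isSome_symm_of_conjIS x w), conjIS_symm_conjIS h1, invIS_conjIS_symm h1]
        simp
      · split_ifs with h3
        · have h4 : conjIS x.symm w' ≠ w := by
            rintro rfl
            exact h2 (conjIS_symm_conjIS (x := x.symm) h3)
          simp [h2, h4]
        · simp [h2]
    · rw [if_neg h1]
      split_ifs with h3
      · have h4 : conjIS x.symm w' ≠ w := by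
          rintro rfl
          exact h1 (isSome_symm_of_conjIS x.symm w')
        simp [h4]
      · simp
  have key : (formIS n).comp (ρ (MonoidAlgebra.of ℂ _ x)) =
      (formIS n).compl₂ (ρ (MonoidAlgebra.of ℂ _ x.symm)) :=
    Finsupp.lhom_ext' fun w => LinearMap.ext_ring <|
      Finsupp.lhom_ext' fun w' => LinearMap.ext_ring <| single w w'
  exact LinearMap.congr_fun₂ key u v

lemma formIS_apply (a : MonoidAlgebra ℂ (ISn n)) (u v : VIS n) :
    formIS n (ρ a u) v = formIS n u (ρ (symmIS n a) v) := by
  induction a using MonoidAlgebra.induction_linear with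
  | zero => simp
  | add a b ha hb => simp only [map_add, LinearMap.add_apply, ha, hb]
  | single x r =>
    have hx : ∀ y : ISn n, MonoidAlgebra.single y r = r • MonoidAlgebra.of ℂ _ y := by simp
    rw [extendLinear_single, hx, hx, map_smul, map_smul, LinearMap.smul_apply,
      LinearMap.smul_apply, map_smul, map_smul, LinearMap.smul_apply, h.formIS_of]

lemma deletePoint_single (a : Fin n) (w : ISInv n) :
    ρ (deletePoint a) (Finsupp.single w 1) =
      if (w.1 a).isSome then 0 else Finsupp.single w 1 := by
  rw [deletePoint, h]
  by_cases ha : (w.1 a).isSome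
  · rw [if_pos ha, if_neg]
    intro hc
    simpa [ISn.restrict_apply] using hc a ha
  · have hr : ∀ b c, w.1 b = some c → ISn.restrict {a}ᶜ b = some b := fun b c hb => by
      have : b ≠ a := by
        rintro rfl
        exact ha (by rw [hb]; rfl)
      simp [ISn.restrict_apply, this]
    have hdom : ∀ b, (w.1 b).isSome → (ISn.restrict {a}ᶜ b).isSome := fun b hb => by
      obtain ⟨c, hc⟩ := Option.isSome_iff_exists.1 hb
      rw [hr b c hc]
      rfl
    have h1 : invIS w (ISn.restrict {a}ᶜ) = 0 := by
      rw [invIS, Set.ncard_eq_zero]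
      refine Set.eq_empty_of_forall_notMem ?_
      rintro ⟨b, c⟩ ⟨hbc, hw, u, v, hu, hv, hvu⟩
      dsimp only at hbc hw hu hv
      rw [hr b c hw] at hu
      rw [hr c b (w.apply_comm hw)] at hv
      cases hu
      cases hv
      exact lt_asymm hbc hvu
    have h2 : conjIS (ISn.restrict {a}ᶜ) w = w := by
      refine Subtype.ext (PEquiv.ext fun b => Option.ext fun c => ?_)
      rw [conjIS_apply_eq_some]
      constructor
      · rintro ⟨b', c', hb, hw, hc⟩
        rw [hr b' c' hw] at hb
        rw [hr c' b' (w.apply_comm hw)] at hc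
        cases hb
        cases hc
        exact hw
      · intro hw
        exact ⟨b, c, hr b c hw, hw, hr c b (w.apply_comm hw)⟩
    rw [if_neg ha, if_pos hdom, h1, h2, pow_zero, one_smul]

lemma isSome_iff_of_apply_ne_zero {X : Finset (Fin n)} {E : MonoidAlgebra ℂ (ISn n)}
    (hE : ∀ a, deletePoint a * E = if a ∈ X then 0 else E) {q : VIS n} (hq : ρ E q = q)
    {w : ISInv n} (hw : q w ≠ 0) (a : Fin n) : (w.1 a).isSome ↔ a ∈ X := by
  have h1 : ρ (deletePoint a) q = if a ∈ X then 0 else q := by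
    rw [← hq, ← Module.End.mul_apply, ← map_mul, hE]
    split_ifs <;> simp
  have h2 : (ρ (deletePoint a) q) w = if (w.1 a).isSome then 0 else q w := by
    rw [← formIS_single, h.formIS_apply, symmIS_deletePoint, h.deletePoint_single]
    split_ifs
    · simp
    · rw [formIS_single]
  rw [h1] at h2
  by_cases haX : a ∈ X <;> by_cases hwa : (w.1 a).isSome <;> simp_all

end IsSignedConjugation

/-- The extension of a partial involution by the identity. -/
def ISInv.toPerm {n : ℕ} (w : ISInv n) : Perm (Fin n) :=
  Function.Involutive.toPerm (fun a => (w.1 a).getD a) fun a => by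
    cases hw : w.1 a with
    | none => simp only [hw, Option.getD_none]
    | some b => simp only [hw, w.apply_comm hw, Option.getD_some]

namespace ISInv

variable {n : ℕ} (w : ISInv n)

lemma toPerm_toPerm (a : Fin n) : w.toPerm (w.toPerm a) = a :=
  Function.Involutive.toPerm_involutive _ a

variable {w}

lemma toPerm_apply_of_some {a b : Fin n} (h : w.1 a = some b) : w.toPerm a = b := by
  change (w.1 a).getD a = b
  rw [h]
  rfl

lemma toPerm_apply_of_not_isSome {a : Fin n} (h : ¬ (w.1 a).isSome) : w.toPerm a = a := by
  change (w.1 a).getD a = a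
  rw [Option.not_isSome_iff_eq_none.1 h]
  rfl

lemma apply_eq_some_toPerm {a : Fin n} (h : (w.1 a).isSome) : w.1 a = some (w.toPerm a) := by
  obtain ⟨b, hb⟩ := Option.isSome_iff_exists.1 h
  rw [toPerm_apply_of_some hb, hb]

end ISInv

lemma invIS_ofPerm {n : ℕ} (w : ISInv n) (g : Perm (Fin n)) :
    invIS w (ISn.ofPerm g) = pairInversions w.toPerm g := by
  rw [invIS, pairInversions, ← Set.ncard_coe_finset]
  congr 1
  ext ⟨a, b⟩
  simp only [Set.mem_ofPred_eq, Finset.coe_filter, Finset.mem_univ, true_and, ISn.ofPerm_apply,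
    Option.some.injEq]
  refine and_congr_right fun hab => and_congr ⟨ISInv.toPerm_apply_of_some, fun hw => ?_⟩ ?_
  · by_cases ha : (w.1 a).isSome
    · rw [ISInv.apply_eq_some_toPerm ha, hw]
    · rw [ISInv.toPerm_apply_of_not_isSome ha] at hw
      exact absurd hw hab.ne
  · constructor
    · rintro ⟨u, v, rfl, rfl, hvu⟩
      exact hvu
    · intro hvu
      exact ⟨_, _, rfl, rfl, hvu⟩

lemma conjIS_ofPerm_eq {n : ℕ} {w w' : ISInv n} {X : Finset (Fin n)}
    (hw : ∀ a, (w.1 a).isSome ↔ a ∈ X) (hw' : ∀ a, (w'.1 a).isSome ↔ a ∈ X) {σ : Perm (Fin n)}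
    (hσ : ∀ a, σ (w.toPerm a) = w'.toPerm (σ a)) (hX : ∀ a ∉ X, σ a = a) :
    conjIS (ISn.ofPerm σ) w = w' := by
  refine Subtype.ext (PEquiv.ext fun c => Option.ext fun d => ?_)
  rw [conjIS_apply_eq_some]
  constructor
  · rintro ⟨a, b, hc, hab, hd⟩
    rw [ISn.ofPerm_apply, Option.some.injEq] at hc hd
    have ha : a ∈ X := (hw a).1 (by rw [hab]; rfl)
    have hcX : c ∈ X := by
      by_contra hcX
      have := hX c hcX
      rw [← hc] at this hcX
      rw [σ.injective this] at hcX
      exact hcX ha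
    rw [ISInv.apply_eq_some_toPerm ((hw' c).2 hcX), ← hc, ← hσ, ISInv.toPerm_apply_of_some hab, hd]
  · intro hcd
    have hcX : c ∈ X := (hw' c).1 (by rw [hcd]; rfl)
    have ha : σ.symm c ∈ X := by
      by_contra ha
      have := hX _ ha
      rw [σ.apply_symm_apply] at this
      rw [← this] at ha
      exact ha hcX
    refine ⟨σ.symm c, w.toPerm (σ.symm c), ?_, ISInv.apply_eq_some_toPerm ((hw _).2 ha), ?_⟩
    · rw [ISn.ofPerm_apply, σ.apply_symm_apply]
    · rw [ISn.ofPerm_apply, hσ, σ.apply_symm_apply, ISInv.toPerm_apply_of_some hcd]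

lemma exists_ofSubtype_eq {α : Type*} [DecidableEq α] {X : Finset α} {σ : Perm α}
    (hX : ∀ a ∉ X, σ a = a) : ∃ g : Perm X, Perm.ofSubtype g = σ := by
  have h : ∀ a, σ a ∈ X ↔ a ∈ X := fun a => by
    constructor
    · intro ha
      by_contra h'
      rw [hX a h'] at ha
      exact h' ha
    · intro ha
      by_contra h'
      have := σ.injective (hX _ h')
      rw [this] at h'
      exact h' ha
  exact ⟨σ.subtypePerm h, Perm.ofSubtype_subtypePerm _ fun a ha => by
    by_contra h'
    exact ha (hX a h')⟩

namespace IsSignedConjugation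

variable {n : ℕ} {ρ : MonoidAlgebra ℂ (ISn n) →ₐ[ℂ] Module.End ℂ (VIS n)}
  (h : IsSignedConjugation ρ)

/-- The average over the permutations of `X` of the product of two matrix coefficients. -/
noncomputable def _root_.coeffPairing (ρ : MonoidAlgebra ℂ (ISn n) →ₐ[ℂ] Module.End ℂ (VIS n))
    (X : Finset (Fin n)) (u v : VIS n) : VIS n →ₗ[ℂ] VIS n →ₗ[ℂ] ℂ :=
  ∑ g : Perm X, LinearMap.mk₂ ℂ
    (fun p q => formIS n (ρ (MonoidAlgebra.of ℂ _ (ISn.ofPerm (Perm.ofSubtype g))) p) u *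
      formIS n (ρ (MonoidAlgebra.of ℂ _ (ISn.ofPerm (Perm.ofSubtype g))) q) v)
    (fun u u' v => by simp [add_mul]) (fun c u v => by simp [mul_assoc])
    (fun u v v' => by simp [mul_add]) (fun c u v => by simp [mul_left_comm])

lemma _root_.coeffPairing_apply {X : Finset (Fin n)} {u v : VIS n} (p q : VIS n) :
    coeffPairing ρ X u v p q = ∑ g : Perm X,
      formIS n (ρ (MonoidAlgebra.of ℂ _ (ISn.ofPerm (Perm.ofSubtype g))) p) u *
        formIS n (ρ (MonoidAlgebra.of ℂ _ (ISn.ofPerm (Perm.ofSubtype g))) q) v := by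
  simp [coeffPairing, LinearMap.sum_apply]

lemma _root_.coeffPairing_ofPerm {X : Finset (Fin n)} {u v : VIS n} (p q : VIS n) (σ : Perm X) :
    coeffPairing ρ X u v (ρ (MonoidAlgebra.of ℂ _ (ISn.ofPerm (Perm.ofSubtype σ))) p)
      (ρ (MonoidAlgebra.of ℂ _ (ISn.ofPerm (Perm.ofSubtype σ))) q) = coeffPairing ρ X u v p q := by
  rw [coeffPairing_apply, coeffPairing_apply]
  refine Fintype.sum_equiv (Equiv.mulRight σ) _ _ fun g => ?_
  simp only [← Module.End.mul_apply, ← map_mul, Equiv.coe_mulRight]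

include h

lemma ofPerm_single {w w' : ISInv n} {X : Finset (Fin n)}
    (hw : ∀ a, (w.1 a).isSome ↔ a ∈ X) (hw' : ∀ a, (w'.1 a).isSome ↔ a ∈ X) {σ : Perm (Fin n)}
    (hσ : ∀ a, σ (w.toPerm a) = w'.toPerm (σ a)) (hX : ∀ a ∉ X, σ a = a) :
    ρ (MonoidAlgebra.of ℂ _ (ISn.ofPerm σ)) (Finsupp.single w 1) =
      (-1 : ℂ) ^ pairInversions w.toPerm σ • Finsupp.single w' 1 := by
  rw [h, if_pos (fun a _ => by rw [ISn.ofPerm_apply]; rfl), conjIS_ofPerm_eq hw hw' hσ hX, invIS_ofPerm]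

lemma coeffPairing_single_comm {w w' : ISInv n} {X : Finset (Fin n)} (u v : VIS n)
    (hw : ∀ a, (w.1 a).isSome ↔ a ∈ X) (hw' : ∀ a, (w'.1 a).isSome ↔ a ∈ X) :
    coeffPairing ρ X u v (Finsupp.single w 1) (Finsupp.single w' 1) =
      coeffPairing ρ X u v (Finsupp.single w' 1) (Finsupp.single w 1) := by
  have fixed : ∀ {a}, a ∉ X → w.toPerm a = a ∧ w'.toPerm a = a := fun {a} ha =>
    ⟨ISInv.toPerm_apply_of_not_isSome (mt (hw a).1 ha),
      ISInv.toPerm_apply_of_not_isSome (mt (hw' a).1 ha)⟩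
  obtain ⟨σ, hσ2, hσ, hfix⟩ | ⟨π, -, hπ, hπ', hfix, hodd⟩ :=
    exists_swapping_or_odd_commuting w.toPerm w'.toPerm w.toPerm_toPerm w'.toPerm_toPerm
  · have hX : ∀ a ∉ X, σ a = a := fun a ha => hfix a (fixed ha).1 (fixed ha).2
    obtain ⟨g, rfl⟩ := exists_ofSubtype_eq hX
    have h1 := h.ofPerm_single hw hw' hσ hX
    have hgg : Perm.ofSubtype g * Perm.ofSubtype g = 1 := Equiv.ext hσ2
    set s := (-1 : ℂ) ^ pairInversions w.toPerm (Perm.ofSubtype g) with hs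
    have hss : s * s = 1 := by rw [hs, ← pow_add, ← two_mul, pow_mul]; simp
    have h2 := congrArg (ρ (MonoidAlgebra.of ℂ _ (ISn.ofPerm (Perm.ofSubtype g)))) h1
    rw [← Module.End.mul_apply, ← map_mul, ← map_mul, ← map_mul, hgg, map_one, map_one, map_one,
      Module.End.one_apply, map_smul] at h2
    have h3 := congrArg (s • ·) h2
    simp only [smul_smul, hss, one_smul] at h3
    rw [← coeffPairing_ofPerm _ _ g, h1, ← h3, map_smul, map_smul, LinearMap.smul_apply, smul_smul,
      hss, one_smul]
  · have hX : ∀ a ∉ X, π a = a := fun a ha => hfix a (fixed ha).1 (fixed ha).2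
    obtain ⟨g, rfl⟩ := exists_ofSubtype_eq hX
    have h1 := h.ofPerm_single hw hw hπ hX
    have h2 := h.ofPerm_single hw' hw' hπ' hX
    have hsign : (-1 : ℂ) ^ pairInversions w.toPerm (Perm.ofSubtype g) *
        (-1 : ℂ) ^ pairInversions w'.toPerm (Perm.ofSubtype g) = -1 := by
      rw [← pow_add]
      refine Odd.neg_one_pow ?_
      rw [← ZMod.natCast_eq_one_iff_odd]
      exact_mod_cast hodd
    have h3 := coeffPairing_ofPerm (ρ := ρ) (u := u) (v := v) (Finsupp.single w 1)
      (Finsupp.single w' 1) g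
    have h4 := coeffPairing_ofPerm (ρ := ρ) (u := u) (v := v) (Finsupp.single w' 1)
      (Finsupp.single w 1) g
    rw [h1, h2, map_smul, map_smul, LinearMap.smul_apply, smul_smul] at h3 h4
    rw [mul_comm] at h3
    rw [hsign, neg_one_smul, neg_eq_self] at h3 h4
    rw [h3, h4]

lemma coeffPairing_comm {X : Finset (Fin n)} (u v : VIS n) {p q : VIS n}
    (hp : ∀ w, p w ≠ 0 → ∀ a, (w.1 a).isSome ↔ a ∈ X)
    (hq : ∀ w, q w ≠ 0 → ∀ a, (w.1 a).isSome ↔ a ∈ X) :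
    coeffPairing ρ X u v p q = coeffPairing ρ X u v q p := by
  have expand : ∀ p q, coeffPairing ρ X u v p q = ∑ w, ∑ w', p w * q w' *
      coeffPairing ρ X u v (Finsupp.single w 1) (Finsupp.single w' 1) := fun p q => by
    have hV : ∀ p : VIS n, p = ∑ w, p w • Finsupp.single w 1 := by simp
    conv_lhs => rw [hV p, hV q]
    simp only [map_sum, map_smul, LinearMap.sum_apply, LinearMap.smul_apply, smul_eq_mul,
      Finset.mul_sum]
    rw [Finset.sum_comm]
    exact Finset.sum_congr rfl fun w _ => Finset.sum_congr rfl fun w' _ => by ring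
  rw [expand p q, expand q p, Finset.sum_comm]
  refine Finset.sum_congr rfl fun w _ => Finset.sum_congr rfl fun w' _ => ?_
  by_cases hpw : p w' = 0
  · simp [hpw]
  · by_cases hqw : q w = 0
    · simp [hqw]
    · rw [h.coeffPairing_single_comm u v (hp _ hpw) (hq _ hqw), mul_comm (p w')]

lemma exists_smul_eq {E : MonoidAlgebra ℂ (ISn n)} (hE : E ∈ primitiveIdempotentsIS n)
    {p q : VIS n} (hp : ρ E p = p) (hq : ρ E q = q) (hp0 : p ≠ 0) : ∃ c : ℂ, q = c • p := by
  obtain ⟨hEE, hτ, -, hX⟩ := hE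
  have hE0 : E ≠ 0 := by
    rintro rfl
    simp at hp
    exact hp0 hp.symm
  obtain ⟨X, l, hl1, hl, hdel⟩ := hX hE0
  have hE' : ∀ u v, formIS n (ρ E u) v = formIS n u (ρ E v) := fun u v => by
    rw [h.formIS_apply, hτ]
  have hcoeff : ∀ (p u : VIS n) (g : Perm X), ρ E p = p →
      formIS n (ρ (MonoidAlgebra.of ℂ _ (ISn.ofPerm (Perm.ofSubtype g))) p) (ρ E u) =
        l g * formIS n p u := fun p u g hp => by
    rw [← hE']
    conv_lhs => rw [← hp]
    rw [← Module.End.mul_apply, ← map_mul, ← Module.End.mul_apply, ← map_mul, hl,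
      map_smul, LinearMap.smul_apply, hp, map_smul, LinearMap.smul_apply, smul_eq_mul]
  have hpair : ∀ (p q u v : VIS n), ρ E p = p → ρ E q = q →
      coeffPairing ρ X (ρ E u) (ρ E v) p q =
        (∑ g, l g * l g : ℝ) * (formIS n p u * formIS n q v) := fun p q u v hp hq => by
    rw [coeffPairing_apply, Complex.ofReal_sum, Finset.sum_mul]
    refine Finset.sum_congr rfl fun g _ => ?_
    rw [hcoeff p u g hp, hcoeff q v g hq, Complex.ofReal_mul]
    ring
  have hpos : (∑ g, l g * l g : ℝ) ≠ 0 := by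
    refine (Finset.sum_pos' (fun g _ => mul_self_nonneg _) ⟨1, Finset.mem_univ _, ?_⟩).ne'
    simp [hl1]
  have hcross : ∀ u v, formIS n p u * formIS n q v = formIS n q u * formIS n p v := fun u v => by
    have := h.coeffPairing_comm (X := X) (ρ E u) (ρ E v)
      (fun w hw => h.isSome_iff_of_apply_ne_zero hdel hp hw)
      (fun w hw => h.isSome_iff_of_apply_ne_zero hdel hq hw)
    rw [hpair p q u v hp hq, hpair q p u v hq hp] at this
    exact mul_left_cancel₀ (Complex.ofReal_ne_zero.2 hpos) this
  obtain ⟨w, hw⟩ := Finsupp.ne_iff.1 hp0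
  refine ⟨q w / p w, Finsupp.ext fun w' => ?_⟩
  have := hcross (Finsupp.single w 1) (Finsupp.single w' 1)
  simp only [formIS_single] at this
  rw [Finsupp.smul_apply, smul_eq_mul, div_mul_eq_mul_div, eq_div_iff hw, ← this, mul_comm]

end IsSignedConjugation

lemma exists_mem_apply_ne_zero_of_sum {M N : Type*} [AddCommMonoid M] [AddCommMonoid N]
    (φ : M →+ N) {s : Multiset M} (h : φ s.sum ≠ 0) : ∃ x ∈ s, φ x ≠ 0 := by
  by_contra! hc
  refine h ?_
  rw [map_multiset_sum]
  refine Multiset.sum_eq_zero fun y hy => ?_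
  obtain ⟨x, hx, rfl⟩ := Multiset.mem_map.1 hy
  exact hc x hx

lemma trace_eq_finrank_range_of_isIdempotentElem {K V : Type*} [Field K] [AddCommGroup V]
    [Module K V] [FiniteDimensional K V] {f : Module.End K V} (hf : IsIdempotentElem f) :
    LinearMap.trace K V f = (Module.finrank K f.range : K) :=
  (LinearMap.IsIdempotentElem.isProj_range f hf).trace

lemma trace_symmIS (n : ℕ) :
    LinearMap.trace ℂ _ (symmIS n) = (Module.finrank ℂ (VIS n) : ℂ) := by
  classical
  rw [Module.finrank_finsupp_self, LinearMap.trace_eq_matrix_trace ℂ (MonoidAlgebra.basis (ISn n) ℂ),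
    Matrix.trace, Fintype.card_subtype]
  have h1 : ∀ x : ISn n, (LinearMap.toMatrix (MonoidAlgebra.basis (ISn n) ℂ)
      (MonoidAlgebra.basis (ISn n) ℂ) (symmIS n)).diag x = if x.symm = x then 1 else 0 := fun x => by
    rw [Matrix.diag_apply, LinearMap.toMatrix_apply, MonoidAlgebra.basis_apply,
      extendLinear_single, ← MonoidAlgebra.basis_apply, Module.Basis.repr_self,
      Finsupp.single_apply]
  simp only [h1, Finset.sum_boole]

lemma trace_mulLeft_mul_symmIS {n : ℕ} {E : MonoidAlgebra ℂ (ISn n)}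
    (hE : E ∈ primitiveIdempotentsIS n) :
    LinearMap.trace ℂ _ (LinearMap.mulLeft ℂ E * symmIS n) =
      (Module.finrank ℂ (Submodule.span ℂ {E}) : ℂ) := by
  obtain ⟨hEE, hτ, hc, -⟩ := hE
  have h1 : LinearMap.mulLeft ℂ E * symmIS n =
      LinearMap.mulLeft ℂ E * (LinearMap.mulLeft ℂ E * symmIS n) := by
    refine LinearMap.ext fun a => ?_
    simp only [Module.End.mul_apply, LinearMap.mulLeft_apply, ← mul_assoc, hEE]
  have h2 : ∀ a, (LinearMap.mulLeft ℂ E * symmIS n * LinearMap.mulLeft ℂ E) a =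
      E * symmIS n a * E := fun a => by
    simp only [Module.End.mul_apply, LinearMap.mulLeft_apply, symmIS_mul, hτ, mul_assoc]
  have hproj : LinearMap.IsProj (Submodule.span ℂ {E})
      (LinearMap.mulLeft ℂ E * symmIS n * LinearMap.mulLeft ℂ E) := by
    refine ⟨fun a => ?_, fun a ha => ?_⟩
    · obtain ⟨c, hc⟩ := hc (symmIS n a)
      rw [h2, hc]
      exact Submodule.smul_mem _ _ (Submodule.mem_span_singleton_self E)
    · obtain ⟨c, rfl⟩ := Submodule.mem_span_singleton.1 ha
      rw [map_smul, h2, hτ, hEE, hEE]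
  rw [h1, LinearMap.trace_mul_comm, hproj.trace]

namespace IsSignedConjugation

variable {n : ℕ} {ρ : MonoidAlgebra ℂ (ISn n) →ₐ[ℂ] Module.End ℂ (VIS n)}
  (h : IsSignedConjugation ρ) {s : Multiset (MonoidAlgebra ℂ (ISn n))}
  (hs : ∀ E ∈ s, E ∈ primitiveIdempotentsIS n) (hsum : s.sum = 1)

include hs hsum in
lemma _root_.sum_finrank_range_eq :
    (s.map fun E => Module.finrank ℂ (ρ E).range).sum =
      (s.map fun E => Module.finrank ℂ (Submodule.span ℂ {E})).sum := by
  have hV : (LinearMap.trace ℂ _ (ρ s.sum)) =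
      (s.map fun E => (Module.finrank ℂ (ρ E).range : ℂ)).sum := by
    rw [map_multiset_sum, map_multiset_sum, Multiset.map_map]
    refine congrArg Multiset.sum (Multiset.map_congr rfl fun E hE => ?_)
    have hidem : IsIdempotentElem (ρ E) := by
      rw [IsIdempotentElem, ← map_mul, (hs E hE).1]
    exact trace_eq_finrank_range_of_isIdempotentElem hidem
  have hA : LinearMap.trace ℂ _ (LinearMap.mulLeft ℂ s.sum * symmIS n) =
      (s.map fun E => (Module.finrank ℂ (Submodule.span ℂ {E}) : ℂ)).sum := by
    let φ : MonoidAlgebra ℂ (ISn n) →ₗ[ℂ] ℂ :=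
      (LinearMap.trace ℂ _).comp ((LinearMap.mulRight ℂ (symmIS n)).comp (LinearMap.mul ℂ _))
    change φ s.sum = _
    rw [map_multiset_sum]
    exact congrArg Multiset.sum (Multiset.map_congr rfl fun E hE =>
      trace_mulLeft_mul_symmIS (hs E hE))
  rw [hsum, map_one, LinearMap.trace_one] at hV
  rw [hsum, LinearMap.mulLeft_one] at hA
  have hA' := (trace_symmIS n).symm.trans hA
  rw [hV] at hA'
  refine Nat.cast_injective (R := ℂ) ?_
  rw [Nat.cast_multiset_sum, Nat.cast_multiset_sum, Multiset.map_map, Multiset.map_map]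
  exact hA'

include h

lemma finrank_range_le {E : MonoidAlgebra ℂ (ISn n)} (hE : E ∈ primitiveIdempotentsIS n) :
    Module.finrank ℂ (ρ E).range ≤ Module.finrank ℂ (Submodule.span ℂ {E}) := by
  have hfix : ∀ p : (ρ E).range, ρ E p = p := by
    rintro ⟨_, p, rfl⟩
    rw [← Module.End.mul_apply, ← map_mul, hE.1]
  by_cases h0 : E = 0
  · rw [h0, map_zero, LinearMap.range_zero, finrank_bot]
    exact Nat.zero_le _
  · rw [finrank_span_singleton h0]
    by_cases hp : ∃ p : (ρ E).range, p ≠ 0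
    · obtain ⟨p, hp⟩ := hp
      refine finrank_le_one p fun q => ?_
      obtain ⟨c, hc⟩ := h.exists_smul_eq hE (hfix p) (hfix q) (by simpa using hp)
      exact ⟨c, Subtype.ext hc.symm⟩
    · push Not at hp
      have : Subsingleton (ρ E).range := subsingleton_of_forall_eq 0 hp
      rw [Module.finrank_zero_of_subsingleton]
      exact zero_le_one

include hs hsum

lemma exists_fixed {E : MonoidAlgebra ℂ (ISn n)} (hE : E ∈ s) (h0 : E ≠ 0) :
    ∃ v, v ≠ 0 ∧ ρ E v = v := by
  have hrank : Module.finrank ℂ (ρ E).range = 1 := by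
    rw [← finrank_span_singleton (K := ℂ) h0]
    by_contra hne
    exact (Multiset.sum_lt_sum (fun E hE => h.finrank_range_le (hs E hE))
      ⟨E, hE, lt_of_le_of_ne (h.finrank_range_le (hs E hE)) hne⟩).ne
      (sum_finrank_range_eq hs hsum)
  have := Module.nontrivial_of_finrank_eq_succ hrank
  obtain ⟨⟨_, v, rfl⟩, hv⟩ := exists_ne (0 : (ρ E).range)
  refine ⟨ρ E v, fun hc => hv (Subtype.ext hc), ?_⟩
  rw [← Module.End.mul_apply, ← map_mul, (hs E hE).1]

lemma apply_eq_zero {E : MonoidAlgebra ℂ (ISn n)} (hE : E ∈ primitiveIdempotentsIS n) {v : VIS n}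
    (hv : ρ E v = v) {a : MonoidAlgebra ℂ (ISn n)} (ha : ∀ b, E * (b * a) * E = 0) :
    ρ a v = 0 := by
  by_contra hne
  obtain ⟨F, hF, hFa⟩ := exists_mem_apply_ne_zero_of_sum
    (ρ.toLinearMap.flip (ρ a v)).toAddMonoidHom (s := s) (by simpa [hsum] using hne)
  change ρ F (ρ a v) ≠ 0 at hFa
  have hFP := hs F hF
  have h1 : ∀ b u, ρ (E * b * F) u = 0 := fun b u => by
    have hfix : ∀ u, ρ F (ρ F u) = ρ F u := fun u => by
      rw [← Module.End.mul_apply, ← map_mul, hFP.1]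
    obtain ⟨c, hc⟩ := h.exists_smul_eq hFP (hfix (ρ a v)) (hfix u) hFa
    rw [map_mul, Module.End.mul_apply, hc, map_smul]
    have : ρ (E * b) (ρ F (ρ a v)) = ρ (E * (b * F * a) * E) v := by
      conv_lhs => rw [← hv]
      simp only [← Module.End.mul_apply, ← map_mul, mul_assoc]
    rw [this, ha, map_zero, LinearMap.zero_apply, smul_zero]
  refine hFa (eq_zero_of_formIS fun u => ?_)
  rw [← hv, ← Module.End.mul_apply, ← map_mul, ← Module.End.mul_apply, ← map_mul, h.formIS_apply,
    symmIS_mul, symmIS_mul, hE.2.1, hFP.2.1, ← mul_assoc, h1, map_zero]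

end IsSignedConjugation

/-- The `ℂ[ISₙ]`-module `V` obtained by extending linearly the action
`x · I_w = (−1)^{inv_w(x)} I_{x w x⁻¹}` if `dom(w) ⊆ dom(x)` and `x · I_w = 0` otherwise,
is a Gelfand model for the semigroup algebra `ℂ[ISₙ]`: for every simple
`ℂ[ISₙ]`-module `S`, the space `Hom_{ℂ[ISₙ]}(S, V)` is one-dimensional over `ℂ`. -/
theorem gelfand_model_CISn (n : ℕ) (hn : 1 ≤ n)
    [Module (MonoidAlgebra ℂ (ISn n)) (VIS n)]
    [IsScalarTower ℂ (MonoidAlgebra ℂ (ISn n)) (VIS n)]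
    (hact : ∀ (x : ISn n) (w : ISInv n),
      (MonoidAlgebra.of ℂ (ISn n) x) • (Finsupp.single w (1 : ℂ) : VIS n) =
        if ∀ a : Fin n, (w.1 a).isSome → (x a).isSome then
          ((-1 : ℂ) ^ invIS w x) • Finsupp.single (conjIS x w) (1 : ℂ)
        else 0) :
    ∀ (S : Type) [AddCommGroup S] [Module (MonoidAlgebra ℂ (ISn n)) S]
      [IsSimpleModule (MonoidAlgebra ℂ (ISn n)) S],
      ∃ f : S →ₗ[MonoidAlgebra ℂ (ISn n)] VIS n, f ≠ 0 ∧
        ∀ g : S →ₗ[MonoidAlgebra ℂ (ISn n)] VIS n, ∃ c : ℂ, ∀ s : S, g s = c • f s := by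
  have smul_comm' : ∀ (c : ℂ) (a : MonoidAlgebra ℂ (ISn n)) (v : VIS n),
      a • c • v = c • a • v := fun c a v => by
    have h1 : ∀ v : VIS n, c • v = (c • (1 : MonoidAlgebra ℂ (ISn n))) • v := fun v => by
      rw [smul_assoc, one_smul]
    rw [h1, h1 (a • v), ← mul_smul, ← mul_smul, mul_smul_comm, smul_mul_assoc, mul_one, one_mul]
  let ρ : MonoidAlgebra ℂ (ISn n) →ₐ[ℂ] Module.End ℂ (VIS n) :=
    AlgHom.ofLinearMap
      (LinearMap.mk₂ ℂ (fun (a : MonoidAlgebra ℂ (ISn n)) (v : VIS n) => a • v)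
        add_smul smul_assoc smul_add (fun c a v => smul_comm' c a v))
      (LinearMap.ext fun v => one_smul _ v) (fun a b => LinearMap.ext fun v => mul_smul a b v)
  have h : IsSignedConjugation ρ := hact
  intro S _ _ _
  obtain ⟨T, hT, hsum⟩ :=
    AddSubmonoid.exists_multiset_of_mem_closure (one_mem_closure_primitiveIdempotentsIS n)
  have : Nontrivial S := IsSimpleModule.nontrivial (MonoidAlgebra ℂ (ISn n)) S
  obtain ⟨s₀, hs₀⟩ := exists_ne (0 : S)
  obtain ⟨E, hET, hEs₀⟩ := exists_mem_apply_ne_zero_of_sum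
    ((smulAddHom (MonoidAlgebra ℂ (ISn n)) S).flip s₀) (s := T) (by simpa [hsum] using hs₀)
  change E • s₀ ≠ 0 at hEs₀
  have hE := hT E hET
  have hE0 : E ≠ 0 := by
    rintro rfl
    simp at hEs₀
  obtain ⟨v, hv0, hv⟩ := h.exists_fixed hT hsum hET hE0
  obtain ⟨s, hEs, hs⟩ : ∃ s : S, E • s = s ∧ s ≠ 0 :=
    ⟨E • s₀, by rw [← mul_smul, hE.1], hEs₀⟩
  have hker : ∀ a : MonoidAlgebra ℂ (ISn n), a • s = 0 → a • v = 0 := fun a ha => by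
    refine h.apply_eq_zero hT hsum hE hv fun b => ?_
    obtain ⟨c, hc⟩ := hE.2.2.1 (b * a)
    have h1 : (c • E) • s = 0 := by
      rw [← hc, mul_smul, hEs, mul_smul, mul_smul, ha, smul_zero, smul_zero]
    by_cases hc0 : c = 0
    · rw [hc, hc0, zero_smul]
    · refine absurd ?_ hs
      have h2 : E = (c⁻¹ • (1 : MonoidAlgebra ℂ (ISn n))) * (c • E) := by
        rw [smul_mul_assoc, one_mul, inv_smul_smul₀ hc0]
      calc s = E • s := hEs.symm
        _ = ((c⁻¹ • (1 : MonoidAlgebra ℂ (ISn n))) * (c • E)) • s := by rw [← h2]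
        _ = 0 := by rw [mul_smul, h1, smul_zero]
  have hsurj := IsSimpleModule.toSpanSingleton_surjective (MonoidAlgebra ℂ (ISn n)) hs
  let π := LinearMap.toSpanSingleton (MonoidAlgebra ℂ (ISn n)) S s
  let f : S →ₗ[MonoidAlgebra ℂ (ISn n)] VIS n :=
    (π.ker.liftQ (LinearMap.toSpanSingleton (MonoidAlgebra ℂ (ISn n)) (VIS n) v) hker).comp
      (π.quotKerEquivOfSurjective hsurj).symm.toLinearMap
  have hf : f s = v := by
    have h1 : (π.quotKerEquivOfSurjective hsurj).symm s = Submodule.Quotient.mk 1 := by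
      rw [LinearEquiv.symm_apply_eq]
      exact (one_smul _ s).symm
    change π.ker.liftQ (LinearMap.toSpanSingleton (MonoidAlgebra ℂ (ISn n)) (VIS n) v) hker
      ((π.quotKerEquivOfSurjective hsurj).symm s) = v
    rw [h1]
    exact one_smul _ v
  refine ⟨f, fun hf0 => hv0 ?_, fun g => ?_⟩
  · rw [← hf, hf0, LinearMap.zero_apply]
  · have hg : ρ E (g s) = g s := (map_smul g E s).symm.trans (congrArg g hEs)
    obtain ⟨c, hc⟩ := h.exists_smul_eq hE hv hg hv0
    refine ⟨c, fun t => ?_⟩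
    obtain ⟨a, rfl⟩ := hsurj t
    rw [LinearMap.toSpanSingleton_apply, map_smul, map_smul, hf, hc, smul_comm']
end
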